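/- Let K be a number field and h ≥ 2 an integer. Then ∑_{𝔪 ∈ S_h(x)} ω(𝔪) = (κ_K/ζ_K(h))·x·log log x + (κ_K·ℭ₁/ζ_K(h))·x + O_h(x/log x) as the real number x → ∞, where the implied constant depends only on h and K. -/

import Mathlib

open Filter Topology Asymptotics NumberField

noncomputable section

/-- The number of distinct (nonzero) prime ideals dividing the ideal `I`. -/
def omegaK {K : Type*} [Field K] [NumberField K] (I : Ideal (𝓞 K)) : ℕ :=
  {p : Ideal (𝓞 K) | p.IsPrime ∧ p ≠ ⊥ ∧ p ∣ I}.ncard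

/-- The ideal `I` is `h`-free: no prime ideal divides it to order `h`. -/
def HFreeI {K : Type*} [Field K] [NumberField K] (h : ℕ) (I : Ideal (𝓞 K)) : Prop :=
  ∀ p : Ideal (𝓞 K), p.IsPrime → p ≠ ⊥ → ¬ p ^ h ∣ I

/-- The ideal `I` is `h`-full: every prime ideal dividing it divides it to
order at least `h`. -/
def HFullI {K : Type*} [Field K] [NumberField K] (h : ℕ) (I : Ideal (𝓞 K)) : Prop :=
  ∀ p : Ideal (𝓞 K), p.IsPrime → p ≠ ⊥ → p ∣ I → p ^ h ∣ I

/-- The ideal-counting constant `κ_K = 2^{r₁} (2π)^{r₂} h_K R_K / (w_K √|d_K|)`. -/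
def kappaK (K : Type*) [Field K] [NumberField K] : ℝ :=
  (2 ^ InfinitePlace.nrRealPlaces K * (2 * Real.pi) ^ InfinitePlace.nrComplexPlaces K *
      (classNumber K) * Units.regulator K) /
    ((Units.torsionOrder K : ℕ) * Real.sqrt |(discr K : ℝ)|)

/-- The Dedekind zeta value `ζ_K(h) = ∑_{𝔞 ≠ 0} N(𝔞)^{-h}`. -/
def zetaK (K : Type*) [Field K] [NumberField K] (h : ℕ) : ℝ :=
  ∑' I : {I : Ideal (𝓞 K) // I ≠ ⊥}, 1 / (Ideal.absNorm I.val : ℝ) ^ h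

/-- `A` is the Mertens constant `𝔄` for the prime ideals of `K`:
`𝔄 = lim (∑_{N(𝔭) ≤ x} 1/N(𝔭) − log log x)`. -/
def MertensK (K : Type*) [Field K] [NumberField K] (A : ℝ) : Prop :=
  Tendsto (fun x : ℝ =>
      (∑ᶠ p ∈ {p : Ideal (𝓞 K) | p.IsPrime ∧ p ≠ ⊥ ∧ (Ideal.absNorm p : ℝ) ≤ x},
        1 / (Ideal.absNorm p : ℝ)) - Real.log (Real.log x))
    atTop (𝓝 A)

/-- The constant `𝔅 = -π²/6`. -/
def BconstK : ℝ := -(Real.pi ^ 2) / 6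

/-- The constant `ℭ₁` for `K`, given the Mertens constant `A`. -/
def C1K (K : Type*) [Field K] [NumberField K] (h : ℕ) (A : ℝ) : ℝ :=
  A - ∑' p : {p : Ideal (𝓞 K) // p.IsPrime ∧ p ≠ ⊥},
    ((Ideal.absNorm p.val : ℝ) - 1) /
      ((Ideal.absNorm p.val : ℝ) * ((Ideal.absNorm p.val : ℝ) ^ h - 1))

/-- The constant `ℭ₂` for `K`, given the Mertens constant `A`. -/
def C2K (K : Type*) [Field K] [NumberField K] (h : ℕ) (A : ℝ) : ℝ :=
  C1K K h A ^ 2 + C1K K h A + BconstK -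
    ∑' p : {p : Ideal (𝓞 K) // p.IsPrime ∧ p ≠ ⊥},
      (((Ideal.absNorm p.val : ℝ) ^ (h - 1) - 1) /
        ((Ideal.absNorm p.val : ℝ) ^ h - 1)) ^ 2

/-- The constant `γ_h` for `K`. -/
def gammaK (K : Type*) [Field K] [NumberField K] (h : ℕ) : ℝ :=
  ∏' p : {p : Ideal (𝓞 K) // p.IsPrime ∧ p ≠ ⊥},
    (1 + ((Ideal.absNorm p.val : ℝ) - (Ideal.absNorm p.val : ℝ) ^ (1 / (h : ℝ))) /
      ((Ideal.absNorm p.val : ℝ) ^ 2 *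
        ((Ideal.absNorm p.val : ℝ) ^ (1 / (h : ℝ)) - 1)))

/-- The convergent series `𝔏_h(r)` for `K`. -/
def LhK (K : Type*) [Field K] [NumberField K] (h : ℕ) (r : ℝ) : ℝ :=
  ∑' p : {p : Ideal (𝓞 K) // p.IsPrime ∧ p ≠ ⊥},
    1 / ((Ideal.absNorm p.val : ℝ) ^ (r / (h : ℝ) - 1) *
      ((Ideal.absNorm p.val : ℝ) -
        (Ideal.absNorm p.val : ℝ) ^ (1 - 1 / (h : ℝ)) + 1))

/-- The constant `𝔇₁` for `K`, given the Mertens constant `A`. -/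
def D1K (K : Type*) [Field K] [NumberField K] (h : ℕ) (A : ℝ) : ℝ :=
  A - Real.log (h : ℝ) + LhK K h ((h : ℝ) + 1) - LhK K h (2 * (h : ℝ))

/-- The constant `𝔇₂` for `K`, given the Mertens constant `A`. -/
def D2K (K : Type*) [Field K] [NumberField K] (h : ℕ) (A : ℝ) : ℝ :=
  D1K K h A ^ 2 + D1K K h A + BconstK -
    ∑' p : {p : Ideal (𝓞 K) // p.IsPrime ∧ p ≠ ⊥},
      ((Ideal.absNorm p.val : ℝ) -
        (Ideal.absNorm p.val : ℝ) ^ (1 - 1 / (h : ℝ)) + 1)⁻¹ ^ 2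

/-!
A product of a cutoff in the logarithmic coordinates of the units and a cutoff of the norm turns a
smoothed count of the ideals in an ideal class into a lattice sum of a compactly supported Lipschitz
function. Comparing this sum with its integral and removing the smoothing gives
`#{I : N(I) ≤ x} = κ x + O(x ^ (1 - δ))`, where the class number formula identifies `κ`.

Evaluating `∑ log N(I)` in two ways then yields the first Mertens theorem for prime ideals, and
partial summation yields the second, with error `O(1 / log x)`. Sieving by the `h`-th powers of the
prime ideals, the number of `h`-free ideals of norm at most `x` divisible by `p` is
`(κ / ζ(h)) (1 / N(p) - (N(p) - 1) / (N(p) (N(p) ^ h - 1))) x + O((x / N(p)) ^ a)` for some `a < 1`.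
The theorem follows by summing over `p`; the Chebyshev bound makes the error terms add up to
`O(x / log x)`.
-/

open Ideal (absNorm)

section LatticeSum

open MeasureTheory Module Submodule
open scoped NNReal Pointwise

lemma abs_measureReal_mul_sub_setIntegral_add_le {E : Type*} [NormedAddCommGroup E]
    [MeasurableSpace E] [BorelSpace E] {μ : Measure E} [μ.IsAddLeftInvariant] {F : E → ℝ} {L : ℝ≥0}
    (hF : LipschitzWith L F) (hFint : Integrable F μ) {D : Set E} (hD : μ D < ⊤) {d : ℝ}
    (hd : ∀ u ∈ D, ‖u‖ ≤ d) (v : E) :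
    |μ.real D * F v - ∫ u in D, F (v + u) ∂μ| ≤ L * d * μ.real D := by
  have hconst : μ.real D * F v = ∫ _ in D, F v ∂μ := by simp
  rw [hconst, ← integral_sub (integrableOn_const (C := F v) hD.ne)
    (hFint.comp_add_left v).integrableOn, ← Real.norm_eq_abs]
  refine norm_setIntegral_le_of_norm_le_const hD fun u hu => ?_
  refine (hF.norm_sub_le _ _).trans ?_
  rw [sub_add_cancel_left, norm_neg]
  gcongr
  exact hd u hu

variable {E ι : Type*} [NormedAddCommGroup E] [NormedSpace ℝ E] [Finite ι] (b : Basis ι ℝ E)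

lemma exists_norm_le_of_mem_fundamentalDomain :
    ∃ d : ℝ, 0 ≤ d ∧ ∀ u ∈ ZSpan.fundamentalDomain b, ‖u‖ ≤ d := by
  obtain ⟨d, hd⟩ := (ZSpan.fundamentalDomain_isBounded b).exists_norm_le
  exact ⟨|d|, abs_nonneg d, fun u hu => (hd u hu).trans (le_abs_self d)⟩

lemma finite_setOf_norm_le_span_int (r : ℝ) :
    {v : span ℤ (Set.range b) | ‖(v : E)‖ ≤ r}.Finite := by
  have : FiniteDimensional ℝ E := b.finiteDimensional_of_finite
  refine Set.Finite.of_finite_image ((ZSpan.setFinite_inter b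
    (Metric.isBounded_closedBall (x := (0 : E)) (r := r))).subset ?_) Subtype.val_injective.injOn
  rintro _ ⟨v, hv, rfl⟩
  exact ⟨mem_closedBall_zero_iff.2 hv, v.2⟩

variable [MeasurableSpace E] [BorelSpace E] (μ : Measure E) [μ.IsAddHaarMeasure]

lemma card_mul_measureReal_fundamentalDomain_le {r d : ℝ}
    (hd : ∀ u ∈ ZSpan.fundamentalDomain b, ‖u‖ ≤ d) (s : Finset (span ℤ (Set.range b)))
    (hs : ∀ v ∈ s, ‖(v : E)‖ ≤ r) :
    s.card * μ.real (ZSpan.fundamentalDomain b) ≤ μ.real (Metric.closedBall 0 (r + d)) := by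
  have : FiniteDimensional ℝ E := b.finiteDimensional_of_finite
  have : VAddInvariantMeasure (span ℤ (Set.range b)) E μ :=
    ⟨fun v s _ => measure_preimage_add μ (v : E) s⟩
  have hfund := ZSpan.isAddFundamentalDomain b μ
  set D := ZSpan.fundamentalDomain b
  have hD : μ D ≠ ⊤ := (ZSpan.fundamentalDomain_isBounded b).measure_lt_top.ne
  calc s.card * μ.real D = ∑ v ∈ s, μ.real (v +ᵥ D) := by
        simp only [measureReal_def, measure_vadd, Finset.sum_const, nsmul_eq_mul]
    _ = μ.real (⋃ v ∈ s, v +ᵥ D) := by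
        refine (measureReal_biUnion_finset₀ (fun v _ w _ hvw => hfund.aedisjoint hvw)
          (fun v _ => hfund.nullMeasurableSet_vadd v) fun v _ => ?_).symm
        rwa [measure_vadd]
    _ ≤ μ.real (Metric.closedBall 0 (r + d)) := by
        refine measureReal_mono (Set.iUnion₂_subset fun v hv => ?_) measure_closedBall_lt_top.ne
        rintro _ ⟨u, hu, rfl⟩
        rw [mem_closedBall_zero_iff]
        exact (norm_add_le _ _).trans (add_le_add (hs v hv) (hd u hu))

/- Replacing `F` on the cell `v + D` by its value at `v` costs at most `L d` per unit volume, and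
only cells inside the ball of radius `r + 2 d` contribute. -/
lemma abs_tsum_sub_integral_le_of_lipschitzWith {F : E → ℝ} {L : ℝ≥0} (hF : LipschitzWith L F)
    {r d : ℝ} (hr : ∀ x, F x ≠ 0 → ‖x‖ ≤ r) (hd0 : 0 ≤ d)
    (hd : ∀ u ∈ ZSpan.fundamentalDomain b, ‖u‖ ≤ d) :
    |μ.real (ZSpan.fundamentalDomain b) * ∑' v : span ℤ (Set.range b), F v - ∫ x, F x ∂μ| ≤
      L * d * μ.real (Metric.closedBall 0 (r + 2 * d)) := by
  have : FiniteDimensional ℝ E := b.finiteDimensional_of_finite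
  have : VAddInvariantMeasure (span ℤ (Set.range b)) E μ :=
    ⟨fun v s _ => measure_preimage_add μ (v : E) s⟩
  set D := ZSpan.fundamentalDomain b
  have hDtop : μ D < ⊤ := (ZSpan.fundamentalDomain_isBounded b).measure_lt_top
  have hFint : Integrable F μ := hF.continuous.integrable_of_hasCompactSupport <|
    HasCompactSupport.intro (isCompact_closedBall 0 r) fun x hx => by
      by_contra h
      exact hx (mem_closedBall_zero_iff.2 (hr x h))
  have hfin := finite_setOf_norm_le_span_int b (r + d)
  set s := hfin.toFinset
  have hout : ∀ v ∉ s, ∀ u : E, ‖u‖ ≤ d → F (v + u) = 0 := by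
    intro v hv u hu
    by_contra h
    refine hv (hfin.mem_toFinset.2 ?_)
    calc ‖(v : E)‖ = ‖(v + u : E) - u‖ := by rw [add_sub_cancel_right]
      _ ≤ ‖(v + u : E)‖ + ‖u‖ := norm_sub_le _ _
      _ ≤ r + d := add_le_add (hr _ h) hu
  have hsum : ∑' v : span ℤ (Set.range b), F v = ∑ v ∈ s, F v :=
    tsum_eq_sum fun v hv => by simpa using hout v hv 0 (by simpa using hd0)
  have hint : ∫ x, F x ∂μ = ∑ v ∈ s, ∫ u in D, F (v + u) ∂μ := by
    rw [(ZSpan.isAddFundamentalDomain b μ).integral_eq_tsum'' F hFint]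
    refine tsum_eq_sum fun v hv => setIntegral_eq_zero_of_forall_eq_zero fun u hu => ?_
    exact hout v hv u (hd u hu)
  have hcell : ∀ v ∈ s, |μ.real D * F v - ∫ u in D, F (v + u) ∂μ| ≤ L * d * μ.real D :=
    fun v _ => abs_measureReal_mul_sub_setIntegral_add_le hF hFint hDtop hd v
  calc _ = |∑ v ∈ s, (μ.real D * F v - ∫ u in D, F (v + u) ∂μ)| := by
        rw [hsum, hint, Finset.mul_sum, Finset.sum_sub_distrib]
    _ ≤ s.card * (L * d * μ.real D) :=
        (Finset.abs_sum_le_sum_abs _ _).trans ((Finset.sum_le_card_nsmul _ _ _ hcell).trans_eq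
          (nsmul_eq_mul _ _))
    _ = L * d * (s.card * μ.real D) := by ring
    _ ≤ L * d * μ.real (Metric.closedBall 0 (r + 2 * d)) := by
        rw [two_mul, ← add_assoc]
        gcongr
        exact card_mul_measureReal_fundamentalDomain_le b μ hd s fun v => hfin.mem_toFinset.1

lemma exists_abs_tsum_smul_sub_integral_le {R : ℝ} (hR : 0 ≤ R) :
    ∃ C : ℝ, 0 ≤ C ∧ ∀ (H : E → ℝ) (L : ℝ≥0), LipschitzWith L H → (∀ x, H x ≠ 0 → ‖x‖ ≤ R) →
      ∀ T : ℝ, 1 ≤ T →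
        |μ.real (ZSpan.fundamentalDomain b) * ∑' v : span ℤ (Set.range b), H (T⁻¹ • (v : E)) -
          T ^ finrank ℝ E * ∫ x, H x ∂μ| ≤ C * L * (T ^ finrank ℝ E / T) := by
  have : FiniteDimensional ℝ E := b.finiteDimensional_of_finite
  obtain ⟨d, hd0, hd⟩ := exists_norm_le_of_mem_fundamentalDomain b
  refine ⟨d * μ.real (Metric.closedBall 0 (R + 2 * d)), by positivity, fun H L hH hsupp T hT => ?_⟩
  have hT0 : 0 < T := by linarith
  have hlip : LipschitzWith (L * ‖T⁻¹‖₊) fun x => H (T⁻¹ • x) :=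
    hH.comp (lipschitzWith_smul T⁻¹)
  have hscaled : ∀ x, H (T⁻¹ • x) ≠ 0 → ‖x‖ ≤ T * R := fun x hx => by
    have := hsupp _ hx
    rwa [norm_smul, norm_inv, Real.norm_of_nonneg hT0.le, inv_mul_le_iff₀ hT0] at this
  have h := abs_tsum_sub_integral_le_of_lipschitzWith b μ hlip hscaled hd0 hd
  rw [Measure.integral_comp_inv_smul, abs_of_pos (by positivity : 0 < T ^ finrank ℝ E),
    smul_eq_mul] at h
  refine h.trans ?_
  have hball : μ.real (Metric.closedBall 0 (T * R + 2 * d)) ≤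
      T ^ finrank ℝ E * μ.real (Metric.closedBall 0 (R + 2 * d)) := by
    rw [Measure.addHaar_real_closedBall' μ 0 (by positivity : 0 ≤ T * R + 2 * d),
      Measure.addHaar_real_closedBall' μ 0 (by positivity : 0 ≤ R + 2 * d), ← mul_assoc, ← mul_pow]
    gcongr
    nlinarith
  have hTinv : ((L * ‖T⁻¹‖₊ : ℝ≥0) : ℝ) = L * T⁻¹ := by
    rw [NNReal.coe_mul, coe_nnnorm, Real.norm_of_nonneg (by positivity)]
  calc _ ≤ L * T⁻¹ * d * (T ^ finrank ℝ E * μ.real (Metric.closedBall 0 (R + 2 * d))) := by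
        rw [hTinv]
        gcongr
    _ = _ := by ring

end LatticeSum

section Cutoff

open scoped NNReal

/-- A Lipschitz cutoff function: it takes values in `[0, 1]`, vanishes outside the closed ball of
radius `r` about the origin, and is Lipschitz with constant `L`. -/
structure IsLipschitzCutoff {E : Type*} [NormedAddCommGroup E] (r : ℝ) (L : ℝ≥0)
    (f : E → ℝ) : Prop where
  lipschitz : LipschitzWith L f
  nonneg : ∀ x, 0 ≤ f x
  le_one : ∀ x, f x ≤ 1
  norm_le : ∀ x, f x ≠ 0 → ‖x‖ ≤ r

lemma dist_prod_le_sum_dist {ι : Type*} (s : Finset ι) {a b : ι → ℝ}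
    (ha : ∀ i ∈ s, |a i| ≤ 1) (hb : ∀ i ∈ s, |b i| ≤ 1) :
    dist (∏ i ∈ s, a i) (∏ i ∈ s, b i) ≤ ∑ i ∈ s, dist (a i) (b i) := by
  classical
  induction s using Finset.induction_on with
  | empty => simp
  | insert j s hj ih =>
    simp only [Finset.forall_mem_insert] at ha hb
    have hprod : |∏ i ∈ s, a i| ≤ 1 := by
      rw [Finset.abs_prod]
      exact Finset.prod_le_one (fun i _ => abs_nonneg _) ha.2
    have hih := ih ha.2 hb.2
    rw [Finset.prod_insert hj, Finset.prod_insert hj, Finset.sum_insert hj]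
    simp only [Real.dist_eq] at hih ⊢
    calc |a j * ∏ i ∈ s, a i - b j * ∏ i ∈ s, b i|
        = |(a j - b j) * ∏ i ∈ s, a i + b j * (∏ i ∈ s, a i - ∏ i ∈ s, b i)| := by ring_nf
      _ ≤ |a j - b j| * 1 + 1 * |∏ i ∈ s, a i - ∏ i ∈ s, b i| := by
        refine (abs_add_le _ _).trans ?_
        rw [abs_mul, abs_mul]
        gcongr
        exact hb.1
      _ ≤ _ := by linarith

namespace IsLipschitzCutoff

variable {E F : Type*} [NormedAddCommGroup E] [NormedAddCommGroup F] {r : ℝ} {L M : ℝ≥0}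
  {f : E → ℝ} {g : F → ℝ}

lemma abs_le_one (hf : IsLipschitzCutoff r L f) (x : E) : |f x| ≤ 1 :=
  abs_le.2 ⟨by linarith [hf.nonneg x], hf.le_one x⟩

lemma pi {ι : Type*} [Fintype ι] (hf : IsLipschitzCutoff r L f) (hr : 0 ≤ r) :
    IsLipschitzCutoff r (Fintype.card ι * L) fun x : ι → E => ∏ i, f (x i) where
  lipschitz := LipschitzWith.of_dist_le_mul fun x y => by
    calc _ ≤ ∑ i, dist (f (x i)) (f (y i)) :=
          dist_prod_le_sum_dist _ (fun i _ => hf.abs_le_one _) fun i _ => hf.abs_le_one _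
      _ ≤ ∑ _i : ι, L * dist x y := by
          gcongr with i
          exact (hf.lipschitz.dist_le_mul _ _).trans (by gcongr; exact dist_le_pi_dist x y i)
      _ = _ := by simp [mul_assoc]
  nonneg x := Finset.prod_nonneg fun i _ => hf.nonneg _
  le_one x := Finset.prod_le_one (fun i _ => hf.nonneg _) fun i _ => hf.le_one _
  norm_le x hx := (pi_norm_le_iff_of_nonneg hr).2 fun i =>
    hf.norm_le _ (Finset.prod_ne_zero_iff.1 hx i (Finset.mem_univ i))

lemma prodMap (hf : IsLipschitzCutoff r L f) (hg : IsLipschitzCutoff r M g) :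
    IsLipschitzCutoff r (L + M) fun x : E × F => f x.1 * g x.2 where
  lipschitz := LipschitzWith.of_dist_le_mul fun x y => by
    calc |f x.1 * g x.2 - f y.1 * g y.2|
        = |(f x.1 - f y.1) * g x.2 + f y.1 * (g x.2 - g y.2)| := by ring_nf
      _ ≤ |f x.1 - f y.1| * 1 + 1 * |g x.2 - g y.2| := by
          refine (abs_add_le _ _).trans ?_
          rw [abs_mul, abs_mul]
          gcongr
          exacts [hg.abs_le_one _, hf.abs_le_one _]
      _ ≤ L * dist x y + M * dist x y := by
          rw [mul_one, one_mul]
          exact add_le_add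
            ((hf.lipschitz.dist_le_mul _ _).trans (by gcongr; exact le_max_left _ _))
            ((hg.lipschitz.dist_le_mul _ _).trans (by gcongr; exact le_max_right _ _))
      _ = _ := by rw [NNReal.coe_add, add_mul]
  nonneg x := mul_nonneg (hf.nonneg _) (hg.nonneg _)
  le_one x := mul_le_one₀ (hf.le_one _) (hg.nonneg _) (hg.le_one _)
  norm_le x hx := max_le (hf.norm_le _ (left_ne_zero_of_mul hx))
    (hg.norm_le _ (right_ne_zero_of_mul hx))

lemma comp_linearMap [NormedSpace ℝ E] [NormedSpace ℝ F] (hg : IsLipschitzCutoff r L g)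
    (A : E →L[ℝ] F) {k : ℝ≥0} (hA : AntilipschitzWith k A) :
    IsLipschitzCutoff (k * r) (L * ‖A‖₊) fun x => g (A x) where
  lipschitz := hg.lipschitz.comp A.lipschitz
  nonneg x := hg.nonneg _
  le_one x := hg.le_one _
  norm_le x hx := (hA.le_mul_norm (map_zero A) x).trans (by gcongr; exact hg.norm_le _ hx)

end IsLipschitzCutoff

/-- The piecewise linear hat function `max (0, 1 - |t|)`, whose integer translates form a partition
of unity. -/
def tent (t : ℝ) : ℝ := max 0 (1 - |t|)

lemma isLipschitzCutoff_tent : IsLipschitzCutoff 1 1 tent where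
  lipschitz := LipschitzWith.of_dist_le_mul fun s t => by
    rw [NNReal.coe_one, one_mul, Real.dist_eq, Real.dist_eq]
    calc |max 0 (1 - |s|) - max 0 (1 - |t|)| ≤ |1 - |s| - (1 - |t|)| := by
          simpa only [max_comm] using abs_max_sub_max_le_abs (1 - |s|) (1 - |t|) 0
      _ = |(|t| - |s|)| := by ring_nf
      _ ≤ |s - t| := by rw [abs_sub_comm s]; exact abs_abs_sub_abs_le_abs_sub t s
  nonneg _ := le_max_left _ _
  le_one t := max_le zero_le_one (by linarith [abs_nonneg t])
  norm_le t ht := by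
    by_contra h
    exact ht (max_eq_left (by rw [Real.norm_eq_abs] at h; linarith))

lemma sum_tent_add_intCast (y : ℝ) : ∑ k ∈ {-⌊y⌋, -⌊y⌋ - 1}, tent (y + (k : ℤ)) = 1 := by
  have h0 := Int.fract_nonneg y
  have h1 := (Int.fract_lt_one y).le
  have hleft : y + ((-⌊y⌋ : ℤ) : ℝ) = Int.fract y := by rw [Int.fract]; push_cast; ring
  have hright : y + ((-⌊y⌋ - 1 : ℤ) : ℝ) = Int.fract y - 1 := by rw [Int.fract]; push_cast; ring
  rw [Finset.sum_pair (by omega), hleft, hright, tent, tent, abs_of_nonneg h0,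
    abs_of_nonpos (by linarith), max_eq_right (by linarith), max_eq_right (by linarith)]
  ring

lemma tent_add_intCast_eq_zero {y : ℝ} {k : ℤ} (hk : k ∉ ({-⌊y⌋, -⌊y⌋ - 1} : Finset ℤ)) :
    tent (y + k) = 0 := by
  simp only [Finset.mem_insert, Finset.mem_singleton, not_or] at hk
  have hfloor := Int.floor_le y
  have hlt := Int.lt_floor_add_one y
  refine max_eq_left (sub_nonpos.2 (le_abs.2 ?_))
  rcases lt_or_gt_of_ne hk.1 with h | h
  · have : (k : ℝ) ≤ -⌊y⌋ - 2 := by exact_mod_cast (by omega : k ≤ -⌊y⌋ - 2)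
    right; linarith
  · have : -(⌊y⌋ : ℝ) + 1 ≤ k := by exact_mod_cast (by omega : -⌊y⌋ + 1 ≤ k)
    left; linarith

lemma hasSum_prod_tent_add_intCast {ι : Type*} [Fintype ι] (y : ι → ℝ) :
    HasSum (fun k : ι → ℤ => ∏ i, tent (y i + k i)) 1 := by
  classical
  let s : ι → Finset ℤ := fun i => {-⌊y i⌋, -⌊y i⌋ - 1}
  have hsum : HasSum (fun k : ι → ℤ => ∏ i, tent (y i + k i))
      (∑ k ∈ Fintype.piFinset s, ∏ i, tent (y i + k i)) := by
    refine hasSum_sum_of_ne_finset_zero fun k hk => ?_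
    rw [Fintype.mem_piFinset, not_forall] at hk
    obtain ⟨i, hi⟩ := hk
    exact Finset.prod_eq_zero (Finset.mem_univ i) (tent_add_intCast_eq_zero hi)
  rw [← Finset.prod_univ_sum s fun i k => tent (y i + (k : ℤ))] at hsum
  simpa only [s, sum_tent_add_intCast, Finset.prod_const_one] using hsum

end Cutoff

section LogPullback

open NumberField.mixedEmbedding NumberField.InfinitePlace
open scoped NNReal

lemma abs_log_sub_log_le {a b c : ℝ} (hc : 0 < c) (ha : c ≤ a) (hb : c ≤ b) :
    |Real.log a - Real.log b| ≤ |a - b| / c := by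
  wlog h : b ≤ a generalizing a b with H
  · rw [abs_sub_comm, abs_sub_comm a b]
    exact H hb ha (by linarith)
  have hb0 : 0 < b := by linarith
  have ha0 : 0 < a := by linarith
  rw [abs_of_nonneg (sub_nonneg.mpr (Real.log_le_log hb0 h)), abs_of_nonneg (by linarith),
    ← Real.log_div ha0.ne' hb0.ne']
  refine (Real.log_le_sub_one_of_pos (by positivity)).trans ?_
  rw [div_sub_one hb0.ne']
  exact div_le_div_of_nonneg_left (by linarith) hc hb

variable {K : Type*} [Field K] [NumberField K]

open scoped Classical in
lemma abs_normAtPlace_sub_le_norm_sub (w : InfinitePlace K) (x y : mixedSpace K) :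
    |normAtPlace w x - normAtPlace w y| ≤ ‖x - y‖ := by
  have hle : ∀ z : mixedSpace K, normAtPlace w z ≤ ‖z‖ := fun z => by
    rw [norm_eq_sup'_normAtPlace]
    exact Finset.le_sup' (fun w => normAtPlace w z) (Finset.mem_univ w)
  have hxy := (normAtPlace_add_le w (x - y) y).trans (add_le_add_left (hle _) _)
  have hyx := (normAtPlace_add_le w (y - x) x).trans (add_le_add_left (hle _) _)
  rw [sub_add_cancel] at hxy hyx
  rw [norm_sub_rev] at hyx
  exact abs_le.2 ⟨by linarith, by linarith⟩

/-- The vector of logarithms of the absolute values of a point of the mixed space. -/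
def logAbs (x : mixedSpace K) : InfinitePlace K → ℝ := fun w => Real.log (normAtPlace w x)

open scoped Classical in
/-- The pull-back of `Ψ` to the mixed space along `logAbs`, extended by `0` to the points of
norm zero, where some absolute value vanishes. -/
def logPullback (Ψ : (InfinitePlace K → ℝ) → ℝ) (x : mixedSpace K) : ℝ :=
  if mixedEmbedding.norm x = 0 then 0 else Ψ (logAbs x)

variable {Ψ : (InfinitePlace K → ℝ) → ℝ} {r : ℝ} {L : ℝ≥0}

lemma logPullback_of_norm_ne_zero {x : mixedSpace K} (hx : mixedEmbedding.norm x ≠ 0) :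
    logPullback Ψ x = Ψ (logAbs x) :=
  if_neg hx

lemma norm_ne_zero_of_logPullback_ne_zero {x : mixedSpace K} (hx : logPullback Ψ x ≠ 0) :
    mixedEmbedding.norm x ≠ 0 :=
  fun h => hx (if_pos h)

lemma normAtPlace_mem_Icc_of_logPullback_ne_zero (hΨ : IsLipschitzCutoff r L Ψ)
    {x : mixedSpace K} (hx : logPullback Ψ x ≠ 0) (w : InfinitePlace K) :
    normAtPlace w x ∈ Set.Icc (Real.exp (-r)) (Real.exp r) := by
  have hnorm := norm_ne_zero_of_logPullback_ne_zero hx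
  rw [logPullback_of_norm_ne_zero hnorm] at hx
  have hpos : 0 < normAtPlace w x :=
    (normAtPlace_nonneg w x).lt_of_ne' (mixedEmbedding.norm_ne_zero_iff.1 hnorm w)
  have hlog : |Real.log (normAtPlace w x)| ≤ r :=
    (norm_le_pi_norm (logAbs x) w).trans (hΨ.norm_le _ hx)
  exact ⟨(Real.le_log_iff_exp_le hpos).1 (abs_le.1 hlog).1,
    (Real.log_le_iff_le_exp hpos).1 (abs_le.1 hlog).2⟩

open scoped Classical in
lemma norm_logAbs_sub_le {c : ℝ} (hc : 0 < c) {x y : mixedSpace K}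
    (hx : ∀ w, c ≤ normAtPlace w x) (hy : ∀ w, c ≤ normAtPlace w y) :
    ‖logAbs x - logAbs y‖ ≤ ‖x - y‖ / c := by
  refine (pi_norm_le_iff_of_nonneg (by positivity)).2 fun w => ?_
  refine (abs_log_sub_log_le hc (hx w) (hy w)).trans ?_
  gcongr
  exact abs_normAtPlace_sub_le_norm_sub w x y

open scoped Classical in
/- Near the support of `Ψ ∘ logAbs` all absolute values are at least `e⁻ʳ / 2`, where the logarithm
is Lipschitz; points further apart than `e⁻ʳ / 2` are handled by `Ψ ≤ 1`. -/
lemma abs_logPullback_sub_le (hΨ : IsLipschitzCutoff r L Ψ) (hL : 1 ≤ L) (x y : mixedSpace K) :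
    |logPullback Ψ x - logPullback Ψ y| ≤ 2 * Real.exp r * L * ‖x - y‖ := by
  have hrange : ∀ z, logPullback Ψ z ∈ Set.Icc 0 1 := fun z => by
    rw [logPullback]
    split_ifs
    exacts [⟨le_rfl, zero_le_one⟩, ⟨hΨ.nonneg _, hΨ.le_one _⟩]
  wlog hx : logPullback Ψ x ≠ 0 generalizing x y with H
  · by_cases hy : logPullback Ψ y ≠ 0
    · rw [abs_sub_comm, norm_sub_rev]
      exact H y x hy
    · rw [not_not.1 hx, not_not.1 hy, sub_self, abs_zero]
      positivity
  have hxw := normAtPlace_mem_Icc_of_logPullback_ne_zero hΨ hx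
  have hexp : Real.exp (-r) = (Real.exp r)⁻¹ := Real.exp_neg r
  rcases le_or_gt (Real.exp (-r) / 2) ‖x - y‖ with hfar | hnear
  · calc |logPullback Ψ x - logPullback Ψ y| ≤ 1 := by
          rw [abs_le]
          constructor <;> linarith [(hrange x).1, (hrange x).2, (hrange y).1, (hrange y).2]
      _ = 2 * Real.exp r * 1 * (Real.exp (-r) / 2) := by rw [hexp]; field_simp
      _ ≤ 2 * Real.exp r * L * ‖x - y‖ := by gcongr; exact_mod_cast hL
  · have hc : 0 < Real.exp (-r) / 2 := by positivity
    have hyw : ∀ w, Real.exp (-r) / 2 ≤ normAtPlace w y := fun w => by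
      linarith [(hxw w).1, (abs_le.1 (abs_normAtPlace_sub_le_norm_sub w x y)).2]
    have hy : mixedEmbedding.norm y ≠ 0 :=
      mixedEmbedding.norm_ne_zero_iff.2 fun w => (hc.trans_le (hyw w)).ne'
    rw [logPullback_of_norm_ne_zero (norm_ne_zero_of_logPullback_ne_zero hx),
      logPullback_of_norm_ne_zero hy]
    calc |Ψ (logAbs x) - Ψ (logAbs y)| ≤ L * ‖logAbs x - logAbs y‖ := hΨ.lipschitz.norm_sub_le _ _
      _ ≤ L * (‖x - y‖ / (Real.exp (-r) / 2)) := by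
          gcongr
          exact norm_logAbs_sub_le hc (fun w => by linarith [(hxw w).1]) hyw
      _ = 2 * Real.exp r * L * ‖x - y‖ := by rw [hexp]; field_simp

open scoped Classical in
lemma isLipschitzCutoff_logPullback (hΨ : IsLipschitzCutoff r L Ψ) (hL : 1 ≤ L) :
    IsLipschitzCutoff (Real.exp r) ((2 * Real.exp r).toNNReal * L)
      (logPullback Ψ : mixedSpace K → ℝ) where
  lipschitz := LipschitzWith.of_dist_le_mul fun x y => by
    rw [NNReal.coe_mul, Real.coe_toNNReal _ (by positivity), dist_eq_norm x y]
    exact abs_logPullback_sub_le hΨ hL x y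
  nonneg x := by
    rw [logPullback]
    split_ifs
    exacts [le_rfl, hΨ.nonneg _]
  le_one x := by
    rw [logPullback]
    split_ifs
    exacts [zero_le_one, hΨ.le_one _]
  norm_le x hx := by
    rw [norm_eq_sup'_normAtPlace]
    exact Finset.sup'_le _ _ fun w _ => (normAtPlace_mem_Icc_of_logPullback_ne_zero hΨ hx w).2

end LogPullback

section UnitCutoff

open NumberField.mixedEmbedding NumberField.Units NumberField.Units.dirichletUnitTheorem Module
  NumberField.InfinitePlace
open scoped NNReal

variable (K : Type*) [Field K] [NumberField K]

open scoped Classical in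
/-- The basis of the logarithmic space formed by the images of the fundamental units. -/
def unitLogBasis : Basis (Fin (rank K)) ℝ (logSpace K) :=
  (basisUnitLattice K).ofZLatticeBasis ℝ (unitLattice K)

/-- The logarithm of the norm as a function of the logarithms of the absolute values. -/
def logNormMap : (InfinitePlace K → ℝ) →ₗ[ℝ] ℝ :=
  ∑ w : InfinitePlace K, (mult w : ℝ) • LinearMap.proj w

/-- The map `logMap` as a function of the logarithms of the absolute values. -/
def logSpaceMap : (InfinitePlace K → ℝ) →ₗ[ℝ] logSpace K :=
  LinearMap.pi fun w =>
    (mult w.val : ℝ) • (LinearMap.proj w.val - (finrank ℚ K : ℝ)⁻¹ • logNormMap K)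

/-- Logarithmic coordinates: the coordinates along the fundamental units and the logarithm of the
norm, as functions of the logarithms of the absolute values. -/
def logCoords : (InfinitePlace K → ℝ) →ₗ[ℝ] (Fin (rank K) → ℝ) × ℝ :=
  ((unitLogBasis K).equivFun.toLinearMap ∘ₗ logSpaceMap K).prod (logNormMap K)

variable {K}

lemma logNormMap_apply (v : InfinitePlace K → ℝ) : logNormMap K v = ∑ w, mult w * v w := by
  simp [logNormMap]

lemma logSpaceMap_apply (v : InfinitePlace K → ℝ) (w : {w : InfinitePlace K // w ≠ w₀}) :
    logSpaceMap K v w = mult w.val * (v w.val - (finrank ℚ K : ℝ)⁻¹ * logNormMap K v) := by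
  simp [logSpaceMap]

variable (K) in
lemma ker_logCoords : LinearMap.ker (logCoords K) = ⊥ := by
  rw [LinearMap.ker_eq_bot']
  intro v hv
  have hspace : logSpaceMap K v = 0 :=
    (unitLogBasis K).equivFun.map_eq_zero_iff.1 (congrArg Prod.fst hv)
  have hnorm : logNormMap K v = 0 := congrArg Prod.snd hv
  have hmult : ∀ w : InfinitePlace K, (mult w : ℝ) ≠ 0 := fun w => by exact_mod_cast mult_ne_zero
  have hne : ∀ w : InfinitePlace K, w ≠ w₀ → v w = 0 := fun w hw => by
    have h := congrFun hspace ⟨w, hw⟩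
    rw [logSpaceMap_apply, hnorm, mul_zero, sub_zero] at h
    exact (mul_eq_zero.1 h).resolve_left (hmult w)
  funext w
  by_cases hw : w = w₀
  · rw [logNormMap_apply, Finset.sum_eq_single w₀ (fun w _ hw => by rw [hne w hw, mul_zero])
      (fun h => absurd (Finset.mem_univ _) h)] at hnorm
    rw [hw]
    exact (mul_eq_zero.1 hnorm).resolve_left (hmult w₀)
  · exact hne w hw

lemma logCoords_logAbs {x : mixedSpace K} (hx : mixedEmbedding.norm x ≠ 0) :
    logCoords K (logAbs x) =
      ((unitLogBasis K).equivFun (logMap x), Real.log (mixedEmbedding.norm x)) := by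
  have hnorm : logNormMap K (logAbs x) = Real.log (mixedEmbedding.norm x) := by
    rw [logNormMap_apply, mixedEmbedding.norm_apply, Real.log_prod fun w _ =>
      pow_ne_zero _ (mixedEmbedding.norm_ne_zero_iff.1 hx w)]
    simp [Real.log_pow, logAbs]
  have hspace : logSpaceMap K (logAbs x) = logMap x := by
    funext w
    rw [logSpaceMap_apply, hnorm, logMap_apply, logAbs]
    ring
  exact Prod.ext (by simp [logCoords, hspace]) hnorm

/-- A weight on the mixed space which cuts out a smoothed fundamental domain for the action of the
units: its sum over a unit orbit is the order of the torsion group. -/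
def unitCutoff (x : mixedSpace K) : ℝ := ∏ i, tent ((unitLogBasis K).equivFun (logMap x) i)

open scoped Classical in
/-- The function `unitCutoff x * g (log (norm x))`, extended by `0` to the points of norm zero. -/
def normCutoff (g : ℝ → ℝ) (x : mixedSpace K) : ℝ :=
  if mixedEmbedding.norm x = 0 then 0 else unitCutoff x * g (Real.log (mixedEmbedding.norm x))

lemma normCutoff_eq_logPullback (g : ℝ → ℝ) :
    (normCutoff g : mixedSpace K → ℝ) =
      logPullback fun v => (∏ i, tent ((logCoords K v).1 i)) * g (logCoords K v).2 := by
  funext x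
  rw [normCutoff, logPullback]
  split_ifs with hx
  · rfl
  · rw [logCoords_logAbs hx, unitCutoff]

open scoped Classical in
variable (K) in
lemma exists_isLipschitzCutoff_normCutoff {r : ℝ} (hr : 1 ≤ r) :
    ∃ (R : ℝ) (C : ℝ≥0), 0 ≤ R ∧ ∀ (g : ℝ → ℝ) (L : ℝ≥0), 1 ≤ L → IsLipschitzCutoff r L g →
      IsLipschitzCutoff R (C * L) (normCutoff g : mixedSpace K → ℝ) := by
  obtain ⟨k, -, hanti⟩ := (logCoords K).exists_antilipschitzWith (ker_logCoords K)
  set A := LinearMap.toContinuousLinearMap (logCoords K)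
  refine ⟨Real.exp (k * r), (2 * Real.exp (k * r)).toNNReal * ((rank K + 1) * (1 + ‖A‖₊)),
    (Real.exp_pos _).le, fun g L hL hg => ?_⟩
  have htent : IsLipschitzCutoff r (rank K * L) fun v : Fin (rank K) → ℝ => ∏ i, tent (v i) := by
    have h := isLipschitzCutoff_tent.pi (ι := Fin (rank K)) zero_le_one
    rw [Fintype.card_fin] at h
    exact ⟨h.lipschitz.weaken (by gcongr), h.nonneg, h.le_one,
      fun x hx => (h.norm_le x hx).trans hr⟩
  have hcoords := (htent.prodMap hg).comp_linearMap A hanti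
  rw [normCutoff_eq_logPullback, mul_assoc]
  refine isLipschitzCutoff_logPullback ⟨hcoords.lipschitz.weaken ?_, hcoords.nonneg,
    hcoords.le_one, hcoords.norm_le⟩ ?_
  · calc (rank K * L + L) * ‖A‖₊ = (rank K + 1) * ‖A‖₊ * L := by ring
      _ ≤ (rank K + 1) * (1 + ‖A‖₊) * L := by gcongr; exact le_add_self
  · exact one_le_mul (one_le_mul le_add_self le_self_add) hL

end UnitCutoff

lemma hasSum_comp_snd {α β : Type*} [Finite α] {f : β → ℝ} {s : ℝ} (hf : HasSum f s)
    (hf0 : ∀ b, 0 ≤ f b) : HasSum (fun z : α × β => f z.2) (Nat.card α * s) := by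
  have := Fintype.ofFinite α
  have hone : HasSum (fun _ : α => (1 : ℝ)) (Nat.card α) := by
    simpa [Nat.card_eq_fintype_card] using hasSum_fintype fun _ : α => (1 : ℝ)
  simpa only [one_mul] using
    hone.mul hf (hone.summable.mul_of_nonneg hf.summable (fun _ => zero_le_one) hf0)

section UnitOrbit

open NumberField.mixedEmbedding NumberField.Units NumberField.Units.dirichletUnitTheorem Module

variable {K : Type*} [Field K] [NumberField K]

lemma logMap_torsion_mul_prod_fundSystem_smul {x : mixedSpace K} (hx : mixedEmbedding.norm x ≠ 0)
    (z : torsion K) (k : Fin (rank K) → ℤ) :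
    logMap (((z : (𝓞 K)ˣ) * ∏ i, fundSystem K i ^ k i) • x) =
      logMap x + (unitLogBasis K).equivFun.symm (fun i => (k i : ℝ)) := by
  rw [logMap_unit_smul _ hx, add_comm, ofMul_mul, map_add, logEmbedding_eq_zero_iff.2 z.2,
    zero_add, ofMul_prod, map_sum, Basis.equivFun_symm_apply]
  congr! 2 with i
  rw [ofMul_zpow, map_zsmul, logEmbedding_fundSystem, unitLogBasis, Basis.ofZLatticeBasis_apply,
    Int.cast_smul_eq_zsmul]

lemma unitCutoff_torsion_mul_prod_fundSystem_smul {x : mixedSpace K}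
    (hx : mixedEmbedding.norm x ≠ 0) (z : torsion K) (k : Fin (rank K) → ℤ) :
    unitCutoff (((z : (𝓞 K)ˣ) * ∏ i, fundSystem K i ^ k i) • x) =
      ∏ i, tent ((unitLogBasis K).equivFun (logMap x) i + k i) := by
  rw [unitCutoff, logMap_torsion_mul_prod_fundSystem_smul hx, map_add,
    LinearEquiv.apply_symm_apply]
  rfl

lemma hasSum_unitCutoff_smul {x : mixedSpace K} (hx : mixedEmbedding.norm x ≠ 0) :
    HasSum (fun u : (𝓞 K)ˣ => unitCutoff (u • x)) (torsionOrder K) := by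
  have hbij : Function.Bijective fun z : torsion K × (Fin (rank K) → ℤ) =>
      (z.1 : (𝓞 K)ˣ) * ∏ i, fundSystem K i ^ z.2 i := by
    simpa only [Function.bijective_iff_existsUnique, eq_comm] using exist_unique_eq_mul_prod K
  rw [← (Equiv.ofBijective _ hbij).hasSum_iff]
  have hprod := hasSum_comp_snd (α := torsion K)
    (hasSum_prod_tent_add_intCast ((unitLogBasis K).equivFun (logMap x)))
    fun k => Finset.prod_nonneg fun i _ => isLipschitzCutoff_tent.nonneg _
  rw [mul_one] at hprod
  refine hprod.congr_fun fun z => ?_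
  exact unitCutoff_torsion_mul_prod_fundSystem_smul hx z.1 z.2

lemma hasSum_normCutoff_smul (g : ℝ → ℝ) {x : mixedSpace K} (hx : mixedEmbedding.norm x ≠ 0) :
    HasSum (fun u : (𝓞 K)ˣ => normCutoff g (u • x))
      (torsionOrder K * g (Real.log (mixedEmbedding.norm x))) := by
  refine ((hasSum_unitCutoff_smul hx).mul_right _).congr_fun fun u => ?_
  rw [normCutoff, norm_unit_smul, if_neg hx]

end UnitOrbit

section Principal

lemma hasSum_principal_ideals_of_hasSum_units {R : Type*} [CommRing R] [IsDomain R] {J : Ideal R}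
    {f : R → ℝ} {F : Ideal R → ℝ} {s : ℝ} (hs : HasSum (fun a : J => f a) s) (hf : f 0 = 0)
    (hF : ∀ a ∈ J, a ≠ 0 → HasSum (fun u : Rˣ => f (u * a)) (F (Ideal.span {a}))) :
    HasSum (fun I : {I : Ideal R // I ≠ ⊥ ∧ I ≤ J ∧ I.IsPrincipal} => F I) s := by
  have hgen : ∀ I : {I : Ideal R // I ≠ ⊥ ∧ I ≤ J ∧ I.IsPrincipal},
      ∃ a ∈ J, a ≠ 0 ∧ Ideal.span {a} = I.1 := by
    rintro ⟨I, hI0, hIJ, ⟨a, rfl⟩⟩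
    exact ⟨a, hIJ (Ideal.mem_span_singleton_self a), fun h => hI0 (by simp [h]), rfl⟩
  choose gen hgenJ hgen0 hspan using hgen
  let φ : {I : Ideal R // I ≠ ⊥ ∧ I ≤ J ∧ I.IsPrincipal} × Rˣ → J :=
    fun z => ⟨z.2 * gen z.1, J.mul_mem_left _ (hgenJ _)⟩
  have hspanφ : ∀ z, Ideal.span {(φ z : R)} = z.1.1 := fun z => by
    rw [← hspan z.1, Ideal.span_singleton_mul_left_unit z.2.isUnit]
  have hinj : Function.Injective φ := by
    rintro ⟨I, u⟩ ⟨I', u'⟩ h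
    obtain rfl : I = I' := Subtype.ext (by rw [← hspanφ (I, u), h, hspanφ])
    exact Prod.ext rfl (Units.ext (mul_right_cancel₀ (hgen0 I) (congrArg Subtype.val h)))
  have hrange : ∀ a ∉ Set.range φ, f a = 0 := by
    rintro ⟨a, ha⟩ hφ
    by_cases ha0 : a = 0
    · exact (congrArg f ha0).trans hf
    · let I : {I : Ideal R // I ≠ ⊥ ∧ I ≤ J ∧ I.IsPrincipal} :=
        ⟨Ideal.span {a}, by simpa using ha0, (Ideal.span_singleton_le_iff_mem _).2 ha, ⟨a, rfl⟩⟩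
      obtain ⟨u, hu⟩ := Ideal.span_singleton_eq_span_singleton.1 (hspan I)
      exact absurd ⟨(I, u), Subtype.ext ((mul_comm _ _).trans hu)⟩ hφ
  rw [← hinj.hasSum_iff hrange] at hs
  refine hs.prod_fiberwise fun I => ?_
  rw [← hspan I]
  exact hF _ (hgenJ I) (hgen0 I)

end Principal

section SmoothCount

open NumberField.mixedEmbedding NumberField.Units Module MeasureTheory
open scoped NNReal nonZeroDivisors

variable {K : Type*} [Field K] [NumberField K]

lemma exists_equiv_span_fractionalIdealLatticeBasis (J : (Ideal (𝓞 K))⁰) :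
    ∃ e : (J : Ideal (𝓞 K)) ≃
        Submodule.span ℤ (Set.range (fractionalIdealLatticeBasis K (FractionalIdeal.mk0 K J))),
      ∀ a, (e a : mixedSpace K) = mixedEmbedding K ((a : 𝓞 K) : K) := by
  have hmem : ∀ x : mixedSpace K, x ∈ Submodule.span ℤ
      (Set.range (fractionalIdealLatticeBasis K (FractionalIdeal.mk0 K J))) ↔
      ∃ a ∈ (J : Ideal (𝓞 K)), mixedEmbedding K (a : K) = x := fun x => by
    rw [mem_span_fractionalIdealLatticeBasis]
    simp
  refine ⟨Equiv.ofBijective (fun a => ⟨_, (hmem _).2 ⟨a, a.2, rfl⟩⟩) ⟨fun a b h => ?_, ?_⟩,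
    fun a => rfl⟩
  · exact Subtype.ext (RingOfIntegers.ext (mixedEmbedding_injective K (congrArg Subtype.val h)))
  · rintro ⟨x, hx⟩
    obtain ⟨a, ha, rfl⟩ := (hmem x).1 hx
    exact ⟨⟨a, ha⟩, rfl⟩

lemma norm_inv_smul_mixedEmbedding {T : ℝ} (hT : 0 < T) (a : 𝓞 K) :
    mixedEmbedding.norm (T⁻¹ • mixedEmbedding K (a : K)) =
      absNorm (Ideal.span {a}) / T ^ finrank ℚ K := by
  rw [mixedEmbedding.norm_smul, norm_eq_norm, abs_of_pos (inv_pos.2 hT),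
    Ideal.absNorm_span_singleton, Nat.cast_natAbs, ← Algebra.coe_norm_int, inv_pow]
  push_cast
  field_simp

lemma hasSum_principal_ideals_of_hasSum_lattice {J : (Ideal (𝓞 K))⁰} {g : ℝ → ℝ} {T s : ℝ}
    (hT : 0 < T)
    (hs : HasSum (fun v : Submodule.span ℤ
      (Set.range (fractionalIdealLatticeBasis K (FractionalIdeal.mk0 K J))) =>
        normCutoff g (T⁻¹ • (v : mixedSpace K))) s) :
    HasSum (fun I : {I : Ideal (𝓞 K) // I ≠ ⊥ ∧ I ≤ J ∧ I.IsPrincipal} =>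
      torsionOrder K * g (Real.log (absNorm I.1 / T ^ finrank ℚ K))) s := by
  obtain ⟨e, he⟩ := exists_equiv_span_fractionalIdealLatticeBasis J
  rw [← e.hasSum_iff] at hs
  simp only [Function.comp_def, he] at hs
  refine hasSum_principal_ideals_of_hasSum_units (F := fun I : Ideal (𝓞 K) => torsionOrder K *
    g (Real.log (absNorm I / T ^ finrank ℚ K)))
    (f := fun a : 𝓞 K => normCutoff g (T⁻¹ • mixedEmbedding K (a : K))) hs (by simp [normCutoff])
    fun a _ ha => ?_
  rw [← norm_inv_smul_mixedEmbedding hT]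
  refine (hasSum_normCutoff_smul g ?_).congr_fun fun u => ?_
  · rw [norm_inv_smul_mixedEmbedding hT]
    have : absNorm (Ideal.span {a}) ≠ 0 := by simpa [Ideal.absNorm_eq_zero_iff] using ha
    positivity
  · rw [unitSMul_smul, mul_smul_comm, ← map_mul]
    push_cast
    rfl

open scoped Classical in
/- The sum over principal ideals inside `J` is a Riemann sum for `normCutoff g` along the lattice of
`J`, because the sum over associates of a generator is `torsionOrder K * g (log (N I / Tⁿ))`. -/
lemma exists_abs_tsum_principal_ideals_sub_le (J : (Ideal (𝓞 K))⁰) {r : ℝ} (hr : 1 ≤ r) :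
    ∃ C : ℝ, 0 ≤ C ∧ ∀ (g : ℝ → ℝ) (L : ℝ≥0), 1 ≤ L → IsLipschitzCutoff r L g →
      ∃ c : ℝ, ∀ T : ℝ, 1 ≤ T →
        |∑' I : {I : Ideal (𝓞 K) // I ≠ ⊥ ∧ I ≤ J ∧ I.IsPrincipal},
            g (Real.log (absNorm I.1 / T ^ finrank ℚ K)) - c * T ^ finrank ℚ K| ≤
          C * L * (T ^ finrank ℚ K / T) := by
  set b := fractionalIdealLatticeBasis K (FractionalIdeal.mk0 K J)
  obtain ⟨R, C₁, hR, hcut⟩ := exists_isLipschitzCutoff_normCutoff K hr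
  obtain ⟨C₂, hC₂, hlattice⟩ := exists_abs_tsum_smul_sub_integral_le b volume hR
  set m := (volume : Measure (mixedSpace K)).real (ZSpan.fundamentalDomain b) * torsionOrder K
  have hm : 0 < m := mul_pos (ENNReal.toReal_pos (ZSpan.measure_fundamentalDomain_ne_zero b)
    (ZSpan.fundamentalDomain_isBounded b).measure_lt_top.ne) (by exact_mod_cast torsionOrder_pos K)
  refine ⟨C₂ * C₁ / m, by positivity, fun g L hL hg => ?_⟩
  refine ⟨(∫ x, (normCutoff g : mixedSpace K → ℝ) x) / m, fun T hT => ?_⟩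
  have hT0 : 0 < T := by linarith
  have hsupp : ∀ v : Submodule.span ℤ (Set.range b),
      normCutoff g (T⁻¹ • (v : mixedSpace K)) ≠ 0 → ‖(v : mixedSpace K)‖ ≤ T * R := fun v hv => by
    have := (hcut g L hL hg).norm_le _ hv
    rwa [_root_.norm_smul, norm_inv, Real.norm_of_nonneg hT0.le, inv_mul_le_iff₀ hT0] at this
  have hsum : HasSum (fun v : Submodule.span ℤ (Set.range b) =>
      normCutoff g (T⁻¹ • (v : mixedSpace K))) _ := (summable_of_hasFiniteSupport
    ((finite_setOf_norm_le_span_int b (T * R)).subset hsupp)).hasSum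
  have hideal := (hasSum_principal_ideals_of_hasSum_lattice hT0 hsum).tsum_eq
  have h := hlattice _ _ (hcut g L hL hg).lipschitz (hcut g L hL hg).norm_le T hT
  rw [← hideal, tsum_mul_left, mixedEmbedding.finrank] at h
  rw [NNReal.coe_mul] at h
  set S := ∑' I : {I : Ideal (𝓞 K) // I ≠ ⊥ ∧ I ≤ J ∧ I.IsPrincipal},
    g (Real.log (absNorm I.1 / T ^ finrank ℚ K))
  have hsplit : m * (S - (∫ x, (normCutoff g : mixedSpace K → ℝ) x) / m * T ^ finrank ℚ K) =
      (volume : Measure (mixedSpace K)).real (ZSpan.fundamentalDomain b) * (torsionOrder K * S) -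
        T ^ finrank ℚ K * ∫ x, (normCutoff g : mixedSpace K → ℝ) x := by
    rw [mul_sub, ← mul_assoc m, mul_div_cancel₀ _ hm.ne']
    ring
  rw [← hsplit, abs_mul, abs_of_pos hm, ← le_div_iff₀' hm] at h
  exact h.trans_eq (by ring)

lemma mk0_eq_iff_isPrincipal_mul {C : ClassGroup (𝓞 K)} {J : (Ideal (𝓞 K))⁰}
    (hJ : ClassGroup.mk0 J = C⁻¹) (I : (Ideal (𝓞 K))⁰) :
    ClassGroup.mk0 I = C ↔ ((J * I : (Ideal (𝓞 K))⁰) : Ideal (𝓞 K)).IsPrincipal := by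
  rw [← ClassGroup.mk0_eq_one_iff (SetLike.coe_mem _), Subtype.coe_eta, map_mul, hJ,
    inv_mul_eq_one, eq_comm]

lemma exists_equiv_principal_ideals_of_mk0_eq {C : ClassGroup (𝓞 K)} {J : (Ideal (𝓞 K))⁰}
    (hJ : ClassGroup.mk0 J = C⁻¹) :
    ∃ e : ClassGroup.mk0 ⁻¹' {C} ≃ {I : Ideal (𝓞 K) // I ≠ ⊥ ∧ I ≤ J ∧ I.IsPrincipal},
      ∀ I, (e I).1 = (J : Ideal (𝓞 K)) * (I.1 : Ideal (𝓞 K)) := by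
  let f : ClassGroup.mk0 ⁻¹' {C} → {I : Ideal (𝓞 K) // I ≠ ⊥ ∧ I ≤ J ∧ I.IsPrincipal} := fun I =>
    ⟨((J * I.1 : (Ideal (𝓞 K))⁰) : Ideal (𝓞 K)), nonZeroDivisors.coe_ne_zero _,
      Ideal.mul_le_left, (mk0_eq_iff_isPrincipal_mul hJ I.1).1 I.2⟩
  refine ⟨Equiv.ofBijective f ⟨fun I I' h => ?_, ?_⟩, fun I => rfl⟩
  · exact Subtype.ext (Subtype.ext
      (mul_left_cancel₀ (nonZeroDivisors.coe_ne_zero J) (congrArg Subtype.val h)))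
  · rintro ⟨P, hP0, hPJ, hP⟩
    obtain ⟨I, rfl⟩ := Ideal.dvd_iff_le.2 hPJ
    have hI : I ∈ (Ideal (𝓞 K))⁰ :=
      mem_nonZeroDivisors_of_ne_zero fun h => hP0 (by rw [h, mul_zero, Ideal.zero_eq_bot])
    exact ⟨⟨⟨I, hI⟩, (mk0_eq_iff_isPrincipal_mul hJ ⟨I, hI⟩).2 hP⟩, rfl⟩

lemma exists_abs_tsum_mk0_eq_sub_le (C : ClassGroup (𝓞 K)) {r : ℝ} (hr : 1 ≤ r) :
    ∃ D : ℝ, 0 ≤ D ∧ ∀ (g : ℝ → ℝ) (L : ℝ≥0), 1 ≤ L → IsLipschitzCutoff r L g →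
      ∃ c : ℝ, ∀ X : ℝ, 1 ≤ X →
        |∑' I : ClassGroup.mk0 ⁻¹' {C},
            g (Real.log (absNorm (I.1 : Ideal (𝓞 K)) / X)) - c * X| ≤
          D * L * X ^ (1 - 1 / (finrank ℚ K : ℝ)) := by
  obtain ⟨J, hJ⟩ := ClassGroup.mk0_surjective C⁻¹
  obtain ⟨D, hD, h⟩ := exists_abs_tsum_principal_ideals_sub_le J hr
  obtain ⟨e, he⟩ := exists_equiv_principal_ideals_of_mk0_eq hJ
  set n := finrank ℚ K
  have hn : (n : ℝ) ≠ 0 := by exact_mod_cast (finrank_pos (R := ℚ) (M := K)).ne'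
  set q : ℝ := (absNorm (J : Ideal (𝓞 K)) : ℝ)
  have hq : 1 ≤ q := Nat.one_le_cast.2
    (Nat.one_le_iff_ne_zero.2 (Ideal.absNorm_ne_zero_of_nonZeroDivisors J))
  refine ⟨D * q ^ (1 - 1 / (n : ℝ)), by positivity, fun g L hL hg => ?_⟩
  obtain ⟨c, hc⟩ := h g L hL hg
  refine ⟨c * q, fun X hX => ?_⟩
  have hX0 : 0 < X := by linarith
  have hpow : ((X * q) ^ (1 / (n : ℝ))) ^ n = X * q := by
    rw [← Real.rpow_natCast, ← Real.rpow_mul (by positivity), one_div_mul_cancel hn, Real.rpow_one]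
  have hbound := hc ((X * q) ^ (1 / (n : ℝ)))
    (Real.one_le_rpow (one_le_mul_of_one_le_of_one_le hX hq) (by positivity))
  rw [hpow, ← e.tsum_eq] at hbound
  have hterm : ∀ I, (absNorm (e I).1 : ℝ) / (X * q) =
      absNorm (I.1 : Ideal (𝓞 K)) / X := fun I => by
    rw [he, map_mul, Nat.cast_mul, mul_comm X, mul_div_mul_left _ _ (by positivity)]
  have herror : X * q / (X * q) ^ (1 / (n : ℝ)) =
      X ^ (1 - 1 / (n : ℝ)) * q ^ (1 - 1 / (n : ℝ)) := by
    rw [← Real.mul_rpow hX0.le (by positivity), Real.rpow_sub (by positivity), Real.rpow_one]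
  simp only [hterm, herror] at hbound
  rw [mul_assoc, mul_comm q X]
  exact hbound.trans_eq (by ring)

variable (K) in
/-- The smoothed number of ideals `∑_I g (log (N I / X))`. -/
def smoothIdealCount (g : ℝ → ℝ) (X : ℝ) : ℝ :=
  ∑' I : (Ideal (𝓞 K))⁰, g (Real.log (absNorm (I : Ideal (𝓞 K)) / X))

lemma summable_cutoff_log_absNorm_div {r : ℝ} {L : ℝ≥0} {g : ℝ → ℝ} (hg : IsLipschitzCutoff r L g)
    {X : ℝ} (hX : 0 < X) :
    Summable fun I : (Ideal (𝓞 K))⁰ =>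
      g (Real.log (absNorm (I : Ideal (𝓞 K)) / X)) := by
  refine summable_of_hasFiniteSupport
    ((Ideal.finite_setOfPred_absNorm_le₀ ⌊Real.exp r * X⌋₊).subset fun I hI => Nat.le_floor ?_)
  have hpos : (0 : ℝ) < absNorm (I : Ideal (𝓞 K)) := by
    exact_mod_cast Nat.pos_of_ne_zero (Ideal.absNorm_ne_zero_of_nonZeroDivisors I)
  exact (div_le_iff₀ hX).1 ((Real.log_le_iff_le_exp (by positivity)).1
    ((le_abs_self _).trans (hg.norm_le _ hI)))

variable (K) in
lemma exists_abs_smoothIdealCount_sub_le {r : ℝ} (hr : 1 ≤ r) :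
    ∃ D : ℝ, 0 ≤ D ∧ ∀ (g : ℝ → ℝ) (L : ℝ≥0), 1 ≤ L → IsLipschitzCutoff r L g →
      ∃ c : ℝ, ∀ X : ℝ, 1 ≤ X →
        |smoothIdealCount K g X - c * X| ≤ D * L * X ^ (1 - 1 / (finrank ℚ K : ℝ)) := by
  choose D hD h using fun C : ClassGroup (𝓞 K) => exists_abs_tsum_mk0_eq_sub_le C hr
  refine ⟨∑ C, D C, Finset.sum_nonneg fun C _ => hD C, fun g L hL hg => ?_⟩
  choose c hc using fun C => h C g L hL hg
  refine ⟨∑ C, c C, fun X hX => ?_⟩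
  have hsum := summable_cutoff_log_absNorm_div (K := K) hg (zero_lt_one.trans_le hX)
  have hfiber := hsum.hasSum.tsum_fiberwise ClassGroup.mk0
  rw [smoothIdealCount, ← (hasSum_fintype _).unique hfiber, Finset.sum_mul,
    ← Finset.sum_sub_distrib, Finset.sum_mul, Finset.sum_mul]
  exact (Finset.abs_sum_le_sum_abs _ _).trans (Finset.sum_le_sum fun C _ => hc C X hX)

end SmoothCount

section IdealCount

open Module MeasureTheory
open scoped NNReal nonZeroDivisors

variable (K : Type*) [Field K] [NumberField K]

lemma finite_setOf_absNorm_le (x : ℝ) :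
    {I : Ideal (𝓞 K) | I ≠ ⊥ ∧ (absNorm I : ℝ) ≤ x}.Finite :=
  (Ideal.finite_setOfPred_absNorm_le ⌊x⌋₊).subset fun _ hI => Nat.le_floor hI.2

/-- The nonzero ideals of norm at most `x`. -/
def idealsLE (x : ℝ) : Finset (Ideal (𝓞 K)) :=
  (finite_setOf_absNorm_le K x).toFinset

variable {K}

@[simp]
lemma mem_idealsLE {x : ℝ} {I : Ideal (𝓞 K)} :
    I ∈ idealsLE K x ↔ I ≠ ⊥ ∧ (absNorm I : ℝ) ≤ x := by
  simp [idealsLE]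

lemma one_le_absNorm {I : Ideal (𝓞 K)} (hI : I ≠ ⊥) : (1 : ℝ) ≤ absNorm I :=
  Nat.one_le_cast.2 (Nat.one_le_iff_ne_zero.2 (Ideal.absNorm_eq_zero_iff.not.2 hI))

lemma idealsLE_eq_empty {x : ℝ} (hx : x < 1) : idealsLE K x = ∅ :=
  Finset.eq_empty_of_forall_notMem fun _ hI =>
    hx.not_ge ((one_le_absNorm (mem_idealsLE.1 hI).1).trans (mem_idealsLE.1 hI).2)

variable (K) in
lemma card_idealsLE_sub_card_idealsLE {x y : ℝ} (hxy : x ≤ y) :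
    ((idealsLE K y).card : ℝ) - (idealsLE K x).card =
      ((idealsLE K y).filter fun I => x < absNorm I).card := by
  have hle : (idealsLE K y).filter (fun I => (absNorm I : ℝ) ≤ x) = idealsLE K x := by
    ext I
    simp only [Finset.mem_filter, mem_idealsLE]
    exact ⟨fun h => ⟨h.1.1, h.2⟩, fun h => ⟨⟨h.1, h.2.trans hxy⟩, h.2⟩⟩
  have hcard := Finset.card_filter_add_card_filter_not (s := idealsLE K y)
    (fun I => (absNorm I : ℝ) ≤ x)
  simp only [hle, not_le] at hcard
  rw [← hcard, Nat.cast_add, add_sub_cancel_left]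

variable (K) in
lemma kappaK_eq_dedekindZeta_residue : kappaK K = dedekindZeta_residue K := by
  rw [kappaK, dedekindZeta_residue_def, mul_right_comm _ (classNumber K : ℝ)]

variable (K) in
lemma kappaK_pos : 0 < kappaK K :=
  (kappaK_eq_dedekindZeta_residue K).symm ▸ dedekindZeta_residue_pos K

variable (K) in
lemma tendsto_card_idealsLE_div :
    Tendsto (fun x : ℝ => ((idealsLE K x).card : ℝ) / x) atTop (𝓝 (kappaK K)) := by
  rw [kappaK_eq_dedekindZeta_residue, dedekindZeta_residue_def]
  refine (Ideal.tendsto_norm_le_div_atTop₀ K).congr fun x => ?_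
  have himage : (idealsLE K x : Set (Ideal (𝓞 K))) =
      Subtype.val '' {I : (Ideal (𝓞 K))⁰ | (absNorm (I : Ideal (𝓞 K)) : ℝ) ≤ x} := by
    ext I
    simp [and_comm, mem_nonZeroDivisors_iff_ne_zero]
  rw [← Set.ncard_coe_finset, himage, Set.ncard_image_of_injective _ Subtype.val_injective]
  rfl

variable (K) in
lemma tendsto_card_idealsLE_mul_div {t : ℝ} (ht : 0 < t) :
    Tendsto (fun x : ℝ => ((idealsLE K (t * x)).card : ℝ) / x) atTop (𝓝 (kappaK K * t)) := by
  refine (((tendsto_card_idealsLE_div K).comp (tendsto_id.const_mul_atTop ht)).mul_const t).congr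
    fun x => ?_
  simp only [Function.comp_apply, id_eq]
  field_simp

variable (K) in
lemma tendsto_card_idealsLE_exp_sub_div (s t : ℝ) :
    Tendsto (fun x : ℝ => (((idealsLE K (Real.exp s * x)).card : ℝ) -
      (idealsLE K (Real.exp t * x)).card) / x) atTop
        (𝓝 (kappaK K * (Real.exp s - Real.exp t))) := by
  simpa only [sub_div, mul_sub] using (tendsto_card_idealsLE_mul_div K (Real.exp_pos s)).sub
    (tendsto_card_idealsLE_mul_div K (Real.exp_pos t))

lemma log_div_le_iff_le_exp_mul {x y b : ℝ} (hx : 0 < x) (hy : 0 < y) :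
    Real.log (y / x) ≤ b ↔ y ≤ Real.exp b * x := by
  rw [Real.log_le_iff_le_exp (by positivity), div_le_iff₀ hx]

lemma smoothIdealCount_eq_sum {g : ℝ → ℝ} {b X : ℝ} (hg : ∀ t, g t ≠ 0 → t ≤ b) (hX : 0 < X) :
    smoothIdealCount K g X =
      ∑ I ∈ idealsLE K (Real.exp b * X), g (Real.log (absNorm I / X)) := by
  refine (tsum_subtype ((Ideal (𝓞 K))⁰ : Set (Ideal (𝓞 K)))
    fun I => g (Real.log (absNorm I / X))).trans ?_
  rw [tsum_eq_sum (s := idealsLE K (Real.exp b * X))]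
  · refine Finset.sum_congr rfl fun I hI => Set.indicator_of_mem ?_ _
    exact mem_nonZeroDivisors_of_ne_zero (mem_idealsLE.1 hI).1
  · intro I hI
    by_contra h
    have hI0 : I ≠ ⊥ := mem_nonZeroDivisors_iff_ne_zero.1 (Set.mem_of_indicator_ne_zero h)
    refine hI (mem_idealsLE.2 ⟨hI0, ?_⟩)
    rw [← log_div_le_iff_le_exp_mul hX (zero_lt_one.trans_le (one_le_absNorm hI0))]
    exact hg _ (Set.indicator_apply_ne_zero.1 h).2

lemma smoothIdealCount_le {g : ℝ → ℝ} {a b X : ℝ} (hg : ∀ t, g t ≤ 1) (hab : a ≤ b)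
    (hsupp : ∀ t, g t ≠ 0 → a < t ∧ t ≤ b) (hX : 0 < X) :
    smoothIdealCount K g X ≤
      (idealsLE K (Real.exp b * X)).card - (idealsLE K (Real.exp a * X)).card := by
  rw [card_idealsLE_sub_card_idealsLE K (by gcongr), Finset.natCast_card_filter,
    smoothIdealCount_eq_sum (fun t ht => (hsupp t ht).2) hX]
  refine Finset.sum_le_sum fun I hI => ?_
  have hpos := zero_lt_one.trans_le (one_le_absNorm (mem_idealsLE.1 hI).1)
  split_ifs with h
  · exact hg _
  · rw [not_lt, ← log_div_le_iff_le_exp_mul hX hpos] at h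
    exact (of_not_not fun hne => (hsupp _ hne).1.not_ge h).le

lemma le_smoothIdealCount {g : ℝ → ℝ} {r : ℝ} {L : ℝ≥0} {a b X : ℝ}
    (hg : IsLipschitzCutoff r L g) (hab : a ≤ b) (hone : ∀ t, a < t → t ≤ b → g t = 1)
    (hX : 0 < X) :
    (idealsLE K (Real.exp b * X)).card - (idealsLE K (Real.exp a * X)).card ≤
      smoothIdealCount K g X := by
  rw [card_idealsLE_sub_card_idealsLE K (by gcongr), smoothIdealCount_eq_sum (b := max b r)
    (fun t ht => le_max_of_le_right ((le_abs_self t).trans (hg.norm_le t ht))) hX, Finset.cast_card]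
  refine (Finset.sum_le_sum fun I hI => ?_).trans
    (Finset.sum_le_sum_of_subset_of_nonneg ?_ fun I _ _ => hg.nonneg _)
  · obtain ⟨⟨hI0, hIb⟩, hIa⟩ := by simpa using hI
    have hpos := zero_lt_one.trans_le (one_le_absNorm hI0)
    rw [← log_div_le_iff_le_exp_mul hX hpos] at hIb
    rw [← not_le, ← log_div_le_iff_le_exp_mul hX hpos, not_le] at hIa
    exact (hone _ hIa hIb).ge
  · intro I hI
    obtain ⟨⟨hI0, hIb⟩, -⟩ := by simpa using hI
    exact mem_idealsLE.2 ⟨hI0, hIb.trans (by gcongr; exact le_max_left b r)⟩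

lemma tendsto_div_of_abs_sub_mul_le_rpow {f : ℝ → ℝ} {c C θ : ℝ} (hθ : θ < 1)
    (hf : ∀ x, 1 ≤ x → |f x - c * x| ≤ C * x ^ θ) :
    Tendsto (fun x => f x / x) atTop (𝓝 c) := by
  have hlim : Tendsto (fun x : ℝ => C * x ^ (-(1 - θ))) atTop (𝓝 0) := by
    simpa using (tendsto_rpow_neg_atTop (sub_pos.2 hθ)).const_mul C
  rw [tendsto_iff_dist_tendsto_zero]
  refine squeeze_zero' (.of_forall fun x => dist_nonneg) ?_ hlim
  filter_upwards [eventually_ge_atTop 1] with x hx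
  have hx0 : 0 < x := by linarith
  rw [Real.dist_eq, div_sub' hx0.ne', mul_comm x, abs_div, abs_of_pos hx0, div_le_iff₀ hx0,
    neg_sub, mul_assoc, ← Real.rpow_add_one hx0.ne', sub_add_cancel]
  exact hf x hx

section Thickened

lemma isLipschitzCutoff_thickenedIndicator {E : Type*} [NormedAddCommGroup E] {η r : ℝ}
    (hη : 0 < η) {s : Set E} (hs : ∀ x ∈ s, ‖x‖ ≤ r) :
    IsLipschitzCutoff (r + η) η.toNNReal⁻¹ fun x => (thickenedIndicator hη s x : ℝ) where
  lipschitz := lipschitzWith_thickenedIndicator hη s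
  nonneg x := NNReal.coe_nonneg _
  le_one x := NNReal.coe_le_one.2 (thickenedIndicator_le_one hη s x)
  norm_le x hx := by
    obtain ⟨z, hz, hxz⟩ := Metric.mem_thickening_iff.1
      (of_not_not fun h => hx (NNReal.coe_eq_zero.2 (thickenedIndicator_zero hη s h)))
    linarith [hs z hz, norm_sub_norm_le x z, dist_eq_norm x z]

lemma lt_and_lt_of_thickenedIndicator_Icc_ne_zero {a b η t : ℝ} (hη : 0 < η)
    (ht : (thickenedIndicator hη (Set.Icc a b) t : ℝ) ≠ 0) : a - η < t ∧ t < b + η := by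
  obtain ⟨z, hz, htz⟩ := Metric.mem_thickening_iff.1
    (of_not_not fun h => ht (NNReal.coe_eq_zero.2 (thickenedIndicator_zero hη _ h)))
  obtain ⟨h₁, h₂⟩ := abs_lt.1 (Real.dist_eq t z ▸ htz)
  constructor <;> linarith [hz.1, hz.2]

end Thickened

variable (K) in
/- Comparing with the limit of `#(idealsLE K x) / x` identifies the main term of the smoothed count
up to `O(η)`. -/
lemma exists_card_idealsLE_exp_sub_bounds :
    ∃ D : ℝ, 0 ≤ D ∧ ∀ a b η X : ℝ, -1 ≤ a → a ≤ b → b ≤ 1 → 0 < η → η ≤ 1 → 1 ≤ X →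
      ((idealsLE K (Real.exp b * X)).card : ℝ) - (idealsLE K (Real.exp a * X)).card ≤
        kappaK K * (Real.exp (b + η) - Real.exp (a - η)) * X +
          D * η⁻¹ * X ^ (1 - 1 / (finrank ℚ K : ℝ)) ∧
      kappaK K * (Real.exp b - Real.exp a) * X - D * η⁻¹ * X ^ (1 - 1 / (finrank ℚ K : ℝ)) ≤
        (idealsLE K (Real.exp (b + η) * X)).card - (idealsLE K (Real.exp (a - η) * X)).card := by
  obtain ⟨D, hD, h⟩ := exists_abs_smoothIdealCount_sub_le K one_le_two
  refine ⟨D, hD, fun a b η X ha hab hb hη hη₁ hX => ?_⟩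
  have hX0 : 0 < X := by linarith
  set g : ℝ → ℝ := fun t => thickenedIndicator hη (Set.Icc a b) t
  have hg : IsLipschitzCutoff 2 η.toNNReal⁻¹ g := by
    have hr := isLipschitzCutoff_thickenedIndicator hη (s := Set.Icc a b) (r := 1)
      fun x hx => abs_le.2 ⟨ha.trans hx.1, hx.2.trans hb⟩
    exact ⟨hr.lipschitz, hr.nonneg, hr.le_one, fun x hx => (hr.norm_le x hx).trans (by linarith)⟩
  obtain ⟨c, hc⟩ := h g _ (one_le_inv₀ (by simpa using hη) |>.2 (by simpa using hη₁)) hg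
  rw [NNReal.coe_inv, Real.coe_toNNReal _ hη.le] at hc
  have hlower : ∀ Y : ℝ, 0 < Y → _ := fun Y hY => le_smoothIdealCount (K := K) hg hab
    (fun t h₁ h₂ => NNReal.coe_eq_one.2 (thickenedIndicator_one hη _ ⟨h₁.le, h₂⟩)) hY
  have hupper : ∀ Y : ℝ, 0 < Y → _ := fun Y hY => smoothIdealCount_le (K := K) hg.le_one
    (by linarith : a - η ≤ b + η)
    (fun t ht => (lt_and_lt_of_thickenedIndicator_Icc_ne_zero hη ht).imp_right le_of_lt) hY
  have hfinrank : 0 < 1 / (finrank ℚ K : ℝ) := one_div_pos.2 (Nat.cast_pos.2 finrank_pos)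
  have hmean := tendsto_div_of_abs_sub_mul_le_rpow (sub_lt_self 1 hfinrank) hc
  have hc_le : c ≤ kappaK K * (Real.exp (b + η) - Real.exp (a - η)) :=
    le_of_tendsto_of_tendsto hmean (tendsto_card_idealsLE_exp_sub_div K _ _) <| by
      filter_upwards [eventually_gt_atTop 0] with Y hY
      exact div_le_div_of_nonneg_right (hupper Y hY) hY.le
  have hle_c : kappaK K * (Real.exp b - Real.exp a) ≤ c :=
    le_of_tendsto_of_tendsto (tendsto_card_idealsLE_exp_sub_div K _ _) hmean <| by
      filter_upwards [eventually_gt_atTop 0] with Y hY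
      exact div_le_div_of_nonneg_right (hlower Y hY) hY.le
  obtain ⟨h₁, h₂⟩ := abs_le.1 (hc X hX)
  constructor
  · linarith [hlower X hX0, mul_le_mul_of_nonneg_right hc_le hX0.le]
  · linarith [hupper X hX0, mul_le_mul_of_nonneg_right hle_c hX0.le]

end IdealCount

section IdealCountError

open Module

variable (K : Type*) [Field K] [NumberField K]

lemma exp_le_one_add_two_mul {η : ℝ} (hη : 0 ≤ η) (hη₁ : η ≤ 1) : Real.exp η ≤ 1 + 2 * η := by
  have h := Real.abs_exp_sub_one_le (abs_le.2 ⟨by linarith, hη₁⟩)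
  rw [abs_of_nonneg hη] at h
  linarith [(abs_le.1 h).2]

lemma exists_abs_card_idealsLE_sub_half_le :
    ∃ D : ℝ, 0 ≤ D ∧ ∀ X η : ℝ, 1 ≤ X → 0 < η → η ≤ 1 / 4 →
      |((idealsLE K X).card : ℝ) - (idealsLE K (X / 2)).card - kappaK K * X / 2| ≤
        4 * kappaK K * (η * X) + D * (X ^ (1 - 1 / (finrank ℚ K : ℝ)) / η) := by
  obtain ⟨D, hD, h⟩ := exists_card_idealsLE_exp_sub_bounds K
  refine ⟨D, hD, fun X η hX hη hη₁ => ?_⟩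
  have hlog := Real.log_two_gt_d9
  have hlog₁ := Real.log_two_lt_d9
  have hhalf : Real.exp (-Real.log 2) = 1 / 2 := by
    rw [Real.exp_neg, Real.exp_log two_pos, one_div]
  have hhalfX : 1 / 2 * X = X / 2 := by ring
  have hκ : 0 ≤ kappaK K * X := mul_nonneg (kappaK_pos K).le (by linarith)
  have hexp := exp_le_one_add_two_mul hη.le (by linarith)
  have hexp_neg : 1 - η ≤ Real.exp (-η) := by linarith [Real.add_one_le_exp (-η)]
  have hupper := (h (-Real.log 2) 0 η X (by linarith) (by linarith) zero_le_one hη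
    (by linarith) hX).1
  have hlower := (h (-Real.log 2 + η) (-η) η X (by linarith) (by linarith) (by linarith) hη
    (by linarith) hX).2
  rw [Real.exp_zero, one_mul, zero_add, sub_eq_add_neg (-Real.log 2), Real.exp_add, hhalf,
    hhalfX] at hupper
  rw [neg_add_cancel, Real.exp_zero, one_mul, add_sub_cancel_right, Real.exp_add, hhalf,
    hhalfX] at hlower
  rw [mul_right_comm, mul_right_comm D, ← div_eq_mul_inv, mul_div_assoc] at hupper hlower
  have hmain := mul_le_mul_of_nonneg_left
    (by linarith : Real.exp η - 1 / 2 * Real.exp (-η) ≤ 1 / 2 + 4 * η) hκ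
  have hmain' := mul_le_mul_of_nonneg_left
    (by linarith : 1 / 2 - 4 * η ≤ Real.exp (-η) - 1 / 2 * Real.exp η) hκ
  exact abs_le.2 ⟨by linarith, by linarith⟩

lemma exists_abs_card_idealsLE_sub_half_le_rpow :
    ∃ D : ℝ, 0 ≤ D ∧ ∀ X : ℝ, 1 ≤ X →
      |((idealsLE K X).card : ℝ) - (idealsLE K (X / 2)).card - kappaK K * X / 2| ≤
        D * X ^ (1 - 1 / (2 * finrank ℚ K : ℝ)) := by
  obtain ⟨D, hD, h⟩ := exists_abs_card_idealsLE_sub_half_le K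
  have hκ := kappaK_pos K
  refine ⟨kappaK K + 4 * D, by positivity, fun X hX => ?_⟩
  have hX0 : 0 < X := by linarith
  set n : ℝ := (finrank ℚ K : ℝ)
  have hη : X ^ (-(1 / (2 * n))) ≤ 1 :=
    Real.rpow_le_one_of_one_le_of_nonpos hX (by simpa using by positivity)
  refine (h X (X ^ (-(1 / (2 * n))) / 4) hX (by positivity) (by linarith)).trans_eq ?_
  have hmul : X ^ (-(1 / (2 * n))) * X = X ^ (1 - 1 / (2 * n)) := by
    rw [← Real.rpow_add_one hX0.ne', neg_add_eq_sub]
  have hdiv : X ^ (1 - 1 / n) / X ^ (-(1 / (2 * n))) = X ^ (1 - 1 / (2 * n)) := by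
    rw [← Real.rpow_sub hX0]
    congr 1
    field_simp
    ring
  rw [div_div_eq_mul_div, mul_div_right_comm, hdiv, div_mul_eq_mul_div, hmul]
  ring

lemma le_mul_rpow_of_le_mul_div_add {f : ℝ → ℝ} {a b q C₀ C : ℝ} (hb : 1 < b) (hq : 0 ≤ q)
    (hqb : q < b ^ a) (hC₀ : 0 ≤ C₀) (hC : 0 ≤ C) (hsmall : ∀ x, 0 < x → x < 1 → f x ≤ C₀ * x ^ a)
    (hstep : ∀ x, 1 ≤ x → f x ≤ q * f (x / b) + C * x ^ a) {x : ℝ} (hx : 0 < x) :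
    f x ≤ (C₀ + C / (1 - q / b ^ a)) * x ^ a := by
  have hb0 : 0 < b := by linarith
  have hba : 0 < b ^ a := Real.rpow_pos_of_pos hb0 a
  have hρ : 0 < 1 - q / b ^ a := sub_pos.2 ((div_lt_one hba).2 hqb)
  set D := C₀ + C / (1 - q / b ^ a)
  have hC₀D : C₀ ≤ D := le_add_of_nonneg_right (by positivity)
  have hqD : q / b ^ a * D + C ≤ D := by
    have : C ≤ D * (1 - q / b ^ a) := (div_le_iff₀ hρ).1 (le_add_of_nonneg_left hC₀)
    linarith
  obtain ⟨k, hk⟩ := pow_unbounded_of_one_lt x hb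
  induction k generalizing x with
  | zero => exact (hsmall x hx (by simpa using hk)).trans (by gcongr)
  | succ k ih =>
    rcases lt_or_ge x 1 with hx1 | hx1
    · exact (hsmall x hx hx1).trans (by gcongr)
    calc f x ≤ q * f (x / b) + C * x ^ a := hstep x hx1
      _ ≤ q * (D * (x / b) ^ a) + C * x ^ a := by
        gcongr
        exact ih (by positivity) (by rwa [div_lt_iff₀ hb0, ← pow_succ])
      _ = (q / b ^ a * D + C) * x ^ a := by
        rw [Real.div_rpow hx.le hb0.le]
        ring
      _ ≤ D * x ^ a := by gcongr

lemma le_rpow_of_le_one {x a : ℝ} (hx : 0 < x) (hx1 : x ≤ 1) (ha : a ≤ 1) : x ≤ x ^ a := by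
  simpa using Real.rpow_le_rpow_of_exponent_ge hx hx1 ha

lemma exists_abs_card_idealsLE_sub_le :
    ∃ C δ : ℝ, 0 ≤ C ∧ 0 < δ ∧ δ < 1 / 2 ∧ ∀ x : ℝ, 0 < x →
      |((idealsLE K x).card : ℝ) - kappaK K * x| ≤ C * x ^ (1 - δ) := by
  obtain ⟨D, hD, h⟩ := exists_abs_card_idealsLE_sub_half_le_rpow K
  have hn : (1 : ℝ) ≤ finrank ℚ K := Nat.one_le_cast.2 finrank_pos
  set δ : ℝ := 1 / (4 * finrank ℚ K : ℝ)
  have hδ₀ : 0 < δ := by positivity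
  have hδ₁ : δ < 1 / 2 := one_div_lt_one_div_of_lt two_pos (by linarith)
  have hδ₂ : δ ≤ 1 / (2 * finrank ℚ K : ℝ) := by
    exact one_div_le_one_div_of_le (by positivity) (by linarith)
  have hκ := kappaK_pos K
  have hpow : (1 : ℝ) < 2 ^ (1 - δ) := Real.one_lt_rpow one_lt_two (by linarith)
  refine ⟨kappaK K + D / (1 - 1 / 2 ^ (1 - δ)), δ, ?_, hδ₀, hδ₁, fun x hx => ?_⟩
  · have : 0 ≤ 1 - 1 / (2 : ℝ) ^ (1 - δ) := sub_nonneg.2 ((div_le_one (by positivity)).2 hpow.le)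
    positivity
  refine le_mul_rpow_of_le_mul_div_add (f := fun x => |((idealsLE K x).card : ℝ) - kappaK K * x|)
    one_lt_two zero_le_one hpow hκ.le hD (fun y hy hy1 => ?_) (fun y hy => ?_) hx
  · rw [idealsLE_eq_empty hy1, Finset.card_empty, Nat.cast_zero, zero_sub, abs_neg,
      abs_of_pos (by positivity)]
    gcongr
    exact le_rpow_of_le_one hy hy1.le (by linarith)
  · have hsplit : ((idealsLE K y).card : ℝ) - kappaK K * y =
        ((idealsLE K (y / 2)).card - kappaK K * (y / 2)) +
          ((idealsLE K y).card - (idealsLE K (y / 2)).card - kappaK K * y / 2) := by ring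
    rw [hsplit, one_mul]
    refine (abs_add_le _ _).trans ?_
    gcongr
    exact (h y hy).trans (by gcongr)

end IdealCountError

section WeightedSums

variable {ι : Type*} {F : ℝ → Finset ι} {N : ι → ℝ} {P : ι → Prop}

lemma sum_mul_div_rpow_le_two_rpow_mul_half_add (hF : ∀ x i, i ∈ F x ↔ P i ∧ N i ≤ x)
    (hN : ∀ i, P i → 1 ≤ N i) {w : ι → ℝ} (hw : ∀ i, P i → 0 ≤ w i) {a x : ℝ} (ha : 0 ≤ a)
    (hx : 0 < x) :
    ∑ i ∈ F x, w i * (x / N i) ^ a ≤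
      2 ^ a * ∑ i ∈ F (x / 2), w i * (x / 2 / N i) ^ a + 2 ^ a * ∑ i ∈ F x, w i := by
  classical
  have hsub : F (x / 2) ⊆ F x := fun i hi =>
    (hF _ _).2 ⟨((hF _ _).1 hi).1, ((hF _ _).1 hi).2.trans (by linarith)⟩
  rw [← Finset.sum_sdiff hsub, add_comm, Finset.mul_sum, Finset.mul_sum]
  refine add_le_add (Finset.sum_le_sum fun i hi => ?_)
    ((Finset.sum_le_sum fun i hi => ?_).trans
      (Finset.sum_le_sum_of_subset_of_nonneg Finset.sdiff_subset fun i hi _ => ?_))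
  · have hNi := hN i ((hF _ _).1 hi).1
    rw [show x / N i = 2 * (x / 2 / N i) by field_simp, Real.mul_rpow two_pos.le (by positivity),
      mul_left_comm]
  · simp only [Finset.mem_sdiff, hF, not_and, not_le] at hi
    have hwi := hw i hi.1.1
    have hNi := hN i hi.1.1
    have hdiv : x / N i ≤ 2 := (div_le_iff₀ (by linarith)).2 (by linarith [hi.2 hi.1.1])
    rw [mul_comm]
    gcongr
  · exact mul_nonneg (by positivity) (hw i ((hF _ _).1 hi).1)

lemma exists_sum_mul_div_rpow_le (hF : ∀ x i, i ∈ F x ↔ P i ∧ N i ≤ x) (hN : ∀ i, P i → 1 ≤ N i)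
    {w : ι → ℝ} (hw : ∀ i, P i → 0 ≤ w i) {C : ℝ} (hC : 0 ≤ C)
    (hsum : ∀ x, 0 < x → ∑ i ∈ F x, w i ≤ C * x) {a : ℝ} (ha₀ : 0 ≤ a) (ha₁ : a < 1) :
    ∃ D : ℝ, 0 ≤ D ∧ ∀ x, 0 < x → ∑ i ∈ F x, w i * (x / N i) ^ a ≤ D * x := by
  have hpow : (2 : ℝ) ^ a < 2 ^ (1 : ℝ) := Real.rpow_lt_rpow_of_exponent_lt one_lt_two ha₁
  have hfrac : 0 ≤ 1 - (2 : ℝ) ^ a / 2 ^ (1 : ℝ) :=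
    sub_nonneg.2 ((div_le_one (by positivity)).2 hpow.le)
  refine ⟨0 + 2 ^ a * C / (1 - 2 ^ a / 2 ^ (1 : ℝ)), by positivity, fun x hx => ?_⟩
  have hbound := le_mul_rpow_of_le_mul_div_add
    (f := fun x => ∑ i ∈ F x, w i * (x / N i) ^ a) (a := 1) one_lt_two (by positivity) hpow le_rfl
    (C := 2 ^ a * C) (by positivity) (fun y _ hy => ?_) (fun y hy => ?_) hx
  · simpa only [Real.rpow_one] using hbound
  · have hempty : F y = ∅ := Finset.eq_empty_of_forall_notMem fun i hi =>
      absurd ((hN i ((hF _ _).1 hi).1).trans ((hF _ _).1 hi).2) (not_le.2 hy)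
    simp [hempty]
  · have hy0 : 0 < y := by linarith
    refine (sum_mul_div_rpow_le_two_rpow_mul_half_add hF hN hw ha₀ hy0).trans ?_
    rw [Real.rpow_one, mul_assoc]
    gcongr
    exact hsum y hy0

end WeightedSums

section IdealSums

variable {K : Type*} [Field K] [NumberField K]

variable (K) in
lemma exists_card_idealsLE_le :
    ∃ C : ℝ, 0 ≤ C ∧ ∀ x : ℝ, 0 < x → ((idealsLE K x).card : ℝ) ≤ C * x := by
  obtain ⟨C, δ, hC, hδ, -, h⟩ := exists_abs_card_idealsLE_sub_le K
  have hκ := kappaK_pos K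
  refine ⟨kappaK K + C, by positivity, fun x hx => ?_⟩
  rcases lt_or_ge x 1 with hx1 | hx1
  · rw [idealsLE_eq_empty hx1, Finset.card_empty, Nat.cast_zero]
    positivity
  · have hpow : x ^ (1 - δ) ≤ x := by
      simpa using Real.rpow_le_rpow_of_exponent_le hx1 (by linarith : 1 - δ ≤ 1)
    have := mul_le_mul_of_nonneg_left hpow hC
    linarith [(abs_le.1 (h x hx)).2]

variable (K) in
lemma exists_sum_div_absNorm_rpow_le {a : ℝ} (ha₀ : 0 ≤ a) (ha₁ : a < 1) :
    ∃ D : ℝ, 0 ≤ D ∧ ∀ x : ℝ, 0 < x → ∑ I ∈ idealsLE K x, (x / absNorm I) ^ a ≤ D * x := by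
  obtain ⟨C, hC, h⟩ := exists_card_idealsLE_le K
  simpa using exists_sum_mul_div_rpow_le (w := fun _ => 1) (fun _ _ => mem_idealsLE)
    (fun _ => one_le_absNorm) (fun _ _ => zero_le_one) hC (by simpa using h) ha₀ ha₁

lemma sum_absNorm_rpow_neg_le_of_le_two_mul {C s x : ℝ}
    (hC : ∀ x : ℝ, 0 < x → ((idealsLE K x).card : ℝ) ≤ C * x) (hs : 0 ≤ s) (hx : 0 < x)
    {T : Finset (Ideal (𝓞 K))}
    (hT : ∀ I ∈ T, I ≠ ⊥ ∧ x < absNorm I ∧ (absNorm I : ℝ) ≤ 2 * x) :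
    ∑ I ∈ T, (absNorm I : ℝ) ^ (-s) ≤ 2 * C * x ^ (1 - s) :=
  calc ∑ I ∈ T, (absNorm I : ℝ) ^ (-s) ≤ ∑ _I ∈ T, x ^ (-s) := Finset.sum_le_sum fun I hI =>
        Real.rpow_le_rpow_of_nonpos hx (hT I hI).2.1.le (neg_nonpos.2 hs)
    _ = T.card * x ^ (-s) := by rw [Finset.sum_const, nsmul_eq_mul]
    _ ≤ C * (2 * x) * x ^ (-s) := by
        gcongr
        refine le_trans ?_ (hC _ (by positivity))
        exact_mod_cast Finset.card_le_card fun I hI =>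
          mem_idealsLE.2 ⟨(hT I hI).1, (hT I hI).2.2⟩
    _ = 2 * C * x ^ (1 - s) := by
        rw [sub_eq_add_neg, Real.rpow_add hx, Real.rpow_one]
        ring

variable (K) in
lemma exists_sum_absNorm_rpow_neg_le {s : ℝ} (hs : 1 < s) :
    ∃ B : ℝ, 0 ≤ B ∧ ∀ x : ℝ, 0 < x → ∀ T : Finset (Ideal (𝓞 K)),
      (∀ I ∈ T, I ≠ ⊥ ∧ x < absNorm I) → ∑ I ∈ T, (absNorm I : ℝ) ^ (-s) ≤ B * x ^ (1 - s) := by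
  obtain ⟨C, hC, hcard⟩ := exists_card_idealsLE_le K
  have hρ : 0 < 1 - (2 : ℝ) ^ (1 - s) :=
    sub_pos.2 (Real.rpow_lt_one_of_one_lt_of_neg one_lt_two (by linarith))
  set B := 2 * C / (1 - (2 : ℝ) ^ (1 - s))
  have hB : B = 2 * C + B * 2 ^ (1 - s) := by
    linarith [div_mul_cancel₀ (2 * C) hρ.ne']
  refine ⟨B, by positivity, fun x hx T hT => ?_⟩
  obtain ⟨k, hk⟩ : ∃ k : ℕ, ∀ I ∈ T, (absNorm I : ℝ) ≤ 2 ^ k * x := by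
    obtain ⟨M, hM⟩ := (T.image fun I => (absNorm I : ℝ)).bddAbove
    obtain ⟨k, hk⟩ := pow_unbounded_of_one_lt (M / x) (one_lt_two (α := ℝ))
    exact ⟨k, fun I hI => (hM (Finset.mem_coe.2 (Finset.mem_image_of_mem _ hI))).trans
      ((div_lt_iff₀ hx).1 hk).le⟩
  induction k generalizing x T with
  | zero =>
    have hempty : T = ∅ := Finset.eq_empty_of_forall_notMem fun I hI =>
      absurd (hk I hI) (not_le.2 (by simpa using (hT I hI).2))
    rw [hempty, Finset.sum_empty]
    positivity
  | succ k ih =>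
    rw [← Finset.sum_filter_add_sum_filter_not T fun I => (absNorm I : ℝ) ≤ 2 * x]
    have hnear := sum_absNorm_rpow_neg_le_of_le_two_mul hcard (by linarith : 0 ≤ s) hx
      (T := T.filter fun I => (absNorm I : ℝ) ≤ 2 * x) fun I hI =>
        ⟨(hT I (Finset.mem_filter.1 hI).1).1, (hT I (Finset.mem_filter.1 hI).1).2,
          (Finset.mem_filter.1 hI).2⟩
    have hfar := ih (2 * x) (by positivity) (T.filter fun I => ¬(absNorm I : ℝ) ≤ 2 * x)
      (fun I hI => ⟨(hT I (Finset.mem_filter.1 hI).1).1, not_le.1 (Finset.mem_filter.1 hI).2⟩)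
      (fun I hI => (hk I (Finset.mem_filter.1 hI).1).trans_eq (by ring))
    rw [Real.mul_rpow two_pos.le hx.le] at hfar
    rw [hB]
    linarith

lemma sum_idealsLE_eq_sum_mul_left {J : Ideal (𝓞 K)} (hJ : J ≠ ⊥) (x : ℝ) {f : Ideal (𝓞 K) → ℝ}
    (hf : ∀ I, ¬J ∣ I → f I = 0) :
    ∑ I ∈ idealsLE K x, f I = ∑ I ∈ idealsLE K (x / absNorm J), f (J * I) := by
  have hmem (L : Ideal (𝓞 K)) : J * L ∈ idealsLE K x ↔ L ∈ idealsLE K (x / absNorm J) := by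
    have hJ0 : (0 : ℝ) < absNorm J := zero_lt_one.trans_le (one_le_absNorm hJ)
    rw [mem_idealsLE, mem_idealsLE, map_mul, Nat.cast_mul, le_div_iff₀' hJ0]
    exact and_congr_left fun _ => (mul_ne_zero_iff_left hJ)
  refine (Finset.sum_of_injOn (J * ·) (mul_right_injective₀ hJ).injOn (fun L hL => ?_)
    (fun I hI hI' => hf I ?_) fun _ _ => rfl).symm
  · exact (hmem L).2 hL
  · rintro ⟨L, rfl⟩
    exact hI' ⟨L, (hmem L).1 hI, rfl⟩

end IdealSums

section Primes

variable {K : Type*} [Field K] [NumberField K]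

open scoped Classical in
variable (K) in
/-- The prime ideals (the zero ideal excluded) of norm at most `x`. -/
def primesLE (x : ℝ) : Finset (Ideal (𝓞 K)) :=
  (idealsLE K x).filter Prime

@[simp]
lemma mem_primesLE {x : ℝ} {p : Ideal (𝓞 K)} :
    p ∈ primesLE K x ↔ Prime p ∧ (absNorm p : ℝ) ≤ x := by
  simp only [primesLE, Finset.mem_filter, mem_idealsLE]
  exact ⟨fun h => ⟨h.2, h.1.2⟩, fun h => ⟨⟨h.1.ne_zero, h.2⟩, h.1⟩⟩

lemma two_le_absNorm_of_prime {p : Ideal (𝓞 K)} (hp : Prime p) : (2 : ℝ) ≤ absNorm p := by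
  have h0 : absNorm p ≠ 0 := Ideal.absNorm_eq_zero_iff.not.2 hp.ne_zero
  have h1 : absNorm p ≠ 1 := Ideal.absNorm_eq_one_iff.not.2 (Ideal.isPrime_of_prime hp).ne_top
  exact_mod_cast (by lia : 2 ≤ absNorm p)

lemma primorial_mem_of_natCast_mem {R : Type*} [CommRing R] {p : Ideal R} [hp : p.IsPrime]
    {m n : ℕ} (hm : m ≠ 0) (hmn : m ≤ n) (hmp : (m : R) ∈ p) : (primorial n : R) ∈ p := by
  rw [← Nat.prod_factorization_pow_eq_self hm, Nat.cast_finsuppProd, Finsupp.prod,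
    Ideal.IsPrime.prod_mem_iff] at hmp
  obtain ⟨q, hq, hqp⟩ := hmp
  rw [Nat.cast_pow] at hqp
  have hq' : q ∈ m.primeFactors := by simpa using hq
  have hdvd : q ∣ primorial n := (Nat.prime_of_mem_primeFactors hq').dvd_primorial_iff.2
    ((Nat.le_of_mem_primeFactors hq').trans hmn)
  exact Ideal.mem_of_dvd p (Nat.cast_dvd_cast hdvd) (hp.mem_of_pow_mem _ hqp)

variable (K) in
lemma prod_primesLE_dvd_span_primorial (x : ℝ) :
    ∏ p ∈ primesLE K x, p ∣ Ideal.span {(primorial ⌊x⌋₊ : 𝓞 K)} := by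
  refine Finset.prod_primes_dvd _ (fun p hp => (mem_primesLE.1 hp).1) fun p hp => ?_
  obtain ⟨hp, hpx⟩ := mem_primesLE.1 hp
  have := Ideal.isPrime_of_prime hp
  rw [Ideal.dvd_span_singleton]
  exact primorial_mem_of_natCast_mem (Ideal.absNorm_eq_zero_iff.not.2 hp.ne_zero)
    (Nat.le_floor hpx) (Ideal.absNorm_mem p)

-- All primes of norm at most `x` divide the primorial of `⌊x⌋`, which is at most `4 ^ ⌊x⌋`.
variable (K) in
lemma sum_log_absNorm_primesLE_le {x : ℝ} (hx : 0 ≤ x) :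
    ∑ p ∈ primesLE K x, Real.log (absNorm p) ≤ Module.finrank ℤ (𝓞 K) * Real.log 4 * x := by
  have hne : ∏ p ∈ primesLE K x, (absNorm p : ℝ) ≠ 0 := Finset.prod_ne_zero_iff.2 fun p hp =>
    Nat.cast_ne_zero.2 (Ideal.absNorm_eq_zero_iff.not.2 (mem_primesLE.1 hp).1.ne_zero)
  have hle : ∏ p ∈ primesLE K x, absNorm p ≤ primorial ⌊x⌋₊ ^ Module.finrank ℤ (𝓞 K) := by
    rw [← map_prod, ← Ideal.absNorm_span_natCast]
    refine Nat.le_of_dvd (by rw [Ideal.absNorm_span_natCast]; exact pow_pos (primorial_pos _) _) ?_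
    exact map_dvd absNorm (prod_primesLE_dvd_span_primorial K x)
  calc ∑ p ∈ primesLE K x, Real.log (absNorm p)
      = Real.log (∏ p ∈ primesLE K x, absNorm p : ℕ) := by
        rw [Nat.cast_prod, Real.log_prod fun p hp => Finset.prod_ne_zero_iff.1 hne p hp]
    _ ≤ Real.log ((4 ^ ⌊x⌋₊) ^ Module.finrank ℤ (𝓞 K) : ℕ) := by
        gcongr
        · exact_mod_cast Nat.pos_of_ne_zero (by exact_mod_cast hne)
        · exact hle.trans (Nat.pow_le_pow_left (primorial_le_four_pow _) _)
    _ = Module.finrank ℤ (𝓞 K) * Real.log 4 * ⌊x⌋₊ := by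
        push_cast
        rw [Real.log_pow, Real.log_pow]
        ring
    _ ≤ Module.finrank ℤ (𝓞 K) * Real.log 4 * x := by
        gcongr
        exact Nat.floor_le hx

end Primes

section MertensFirst

open UniqueFactorizationMonoid

variable {K : Type*} [Field K] [NumberField K]

lemma absNorm_le_absNorm_of_dvd {I J : Ideal (𝓞 K)} (hJ : J ≠ ⊥) (h : I ∣ J) :
    absNorm I ≤ absNorm J :=
  Nat.le_of_dvd (Nat.pos_of_ne_zero (Ideal.absNorm_eq_zero_iff.not.2 hJ)) (map_dvd absNorm h)

open scoped Classical in
lemma log_absNorm_eq_sum_primesLE {x : ℝ} {I : Ideal (𝓞 K)} (hI : I ∈ idealsLE K x) :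
    Real.log (absNorm I) =
      ∑ p ∈ primesLE K x, (normalizedFactors I).count p * Real.log (absNorm p) := by
  obtain ⟨hI, hIx⟩ := mem_idealsLE.1 hI
  have hprime : ∀ p ∈ (normalizedFactors I).toFinset, Prime p ∧ p ∣ I := fun p hp =>
    have hp := Multiset.mem_toFinset.1 hp
    ⟨prime_of_normalized_factor p hp, dvd_of_mem_normalizedFactors hp⟩
  have hnorm : (absNorm I : ℝ) =
      ∏ p ∈ (normalizedFactors I).toFinset, (absNorm p : ℝ) ^ (normalizedFactors I).count p := by
    conv_lhs => rw [← Ideal.prod_normalizedFactors_eq_self hI, Finset.prod_multiset_count]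
    simp only [map_prod, map_pow, Nat.cast_prod, Nat.cast_pow]
  rw [hnorm, Real.log_prod fun p hp =>
    pow_ne_zero _ (Nat.cast_ne_zero.2 (Ideal.absNorm_eq_zero_iff.not.2 (hprime p hp).1.ne_zero))]
  simp only [Real.log_pow]
  refine Finset.sum_subset (fun p hp => mem_primesLE.2 ⟨(hprime p hp).1, ?_⟩) fun p _ hp => ?_
  · exact le_trans (mod_cast absNorm_le_absNorm_of_dvd hI (hprime p hp).2) hIx
  · rw [Multiset.count_eq_zero.2 (mt Multiset.mem_toFinset.2 hp), Nat.cast_zero, zero_mul]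

open scoped Classical in
/-- The exponent of the prime `p` in the product of all nonzero ideals of norm at most `x`, the
analogue of the exponent of a prime number in a factorial. -/
def exponentSum (p : Ideal (𝓞 K)) (x : ℝ) : ℝ :=
  ∑ I ∈ idealsLE K x, ((normalizedFactors I).count p : ℝ)

lemma sum_log_absNorm_eq_sum_exponentSum (x : ℝ) :
    ∑ I ∈ idealsLE K x, Real.log (absNorm I) =
      ∑ p ∈ primesLE K x, exponentSum p x * Real.log (absNorm p) := by
  simp only [exponentSum, Finset.sum_mul]
  rw [Finset.sum_comm]
  exact Finset.sum_congr rfl fun I hI => log_absNorm_eq_sum_primesLE hI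

lemma exponentSum_eq_card_add {p : Ideal (𝓞 K)} (hp : Prime p) (x : ℝ) :
    exponentSum p x = (idealsLE K (x / absNorm p)).card + exponentSum p (x / absNorm p) := by
  classical
  rw [exponentSum, sum_idealsLE_eq_sum_mul_left hp.ne_zero, exponentSum, Finset.card_eq_sum_ones,
    Nat.cast_sum, ← Finset.sum_add_distrib]
  · refine Finset.sum_congr rfl fun I hI => ?_
    rw [normalizedFactors_mul hp.ne_zero (mem_idealsLE.1 hI).1,
      normalizedFactors_irreducible hp.irreducible, normalize_eq, Multiset.count_add,
      Multiset.count_singleton_self, Nat.cast_add]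
  · exact fun I hI => Nat.cast_eq_zero.2
      (Multiset.count_eq_zero.2 (mt dvd_of_mem_normalizedFactors hI))

lemma exponentSum_nonneg (p : Ideal (𝓞 K)) (x : ℝ) : 0 ≤ exponentSum p x :=
  Finset.sum_nonneg fun _ _ => Nat.cast_nonneg _

lemma exponentSum_le {C : ℝ} (hC₀ : 0 ≤ C)
    (hC : ∀ x : ℝ, 0 < x → ((idealsLE K x).card : ℝ) ≤ C * x) {p : Ideal (𝓞 K)} (hp : Prime p)
    {x : ℝ} (hx : 0 < x) : exponentSum p x ≤ 2 * C * (x / absNorm p) := by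
  have hN := two_le_absNorm_of_prime hp
  set N : ℝ := (absNorm p : ℝ)
  have hbound := le_mul_rpow_of_le_mul_div_add (f := exponentSum p) (a := 1) (b := N) (q := 1)
    (C₀ := 0) (C := C / N) (by linarith) zero_le_one (by rw [Real.rpow_one]; linarith) le_rfl
    (by positivity) (fun y _ hy => by simp [exponentSum, idealsLE_eq_empty hy])
    (fun y hy => by
      rw [exponentSum_eq_card_add hp, add_comm, one_mul, Real.rpow_one, div_mul_comm, mul_comm _ C]
      gcongr
      exact hC _ (by positivity)) hx
  have hfrac : 1 / (1 - 1 / N) ≤ 2 := by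
    have : 1 / N ≤ 1 / 2 := one_div_le_one_div_of_le two_pos hN
    exact (div_le_iff₀ (by linarith)).2 (by linarith)
  calc exponentSum p x ≤ C * (x / N) * (1 / (1 - 1 / N)) := by
        refine hbound.trans_eq ?_
        rw [Real.rpow_one, Real.rpow_one]
        ring
    _ ≤ C * (x / N) * 2 := by gcongr
    _ = 2 * C * (x / N) := by ring

variable (K) in
lemma exists_abs_exponentSum_sub_le :
    ∃ C C' δ : ℝ, 0 ≤ C ∧ 0 ≤ C' ∧ 0 < δ ∧ δ < 1 ∧ ∀ p : Ideal (𝓞 K), Prime p → ∀ x : ℝ, 0 < x →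
      |exponentSum p x - kappaK K * (x / absNorm p)| ≤
        C * (x / absNorm p) ^ (1 - δ) + C' * (x / (absNorm p : ℝ) ^ 2) := by
  obtain ⟨C, δ, hC, hδ, hδ₂, h⟩ := exists_abs_card_idealsLE_sub_le K
  obtain ⟨C', hC', hcard⟩ := exists_card_idealsLE_le K
  refine ⟨C, 2 * C', δ, hC, by positivity, hδ, by linarith, fun p hp x hx => ?_⟩
  have hN := two_le_absNorm_of_prime hp
  have hxN : 0 < x / absNorm p := by positivity
  have hsecond := exponentSum_le hC' hcard hp hxN
  rw [div_div, ← sq] at hsecond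
  rw [exponentSum_eq_card_add hp, add_sub_right_comm]
  refine (abs_add_le _ _).trans (add_le_add (h _ hxN) ?_)
  rwa [abs_of_nonneg (exponentSum_nonneg p _)]

variable (K) in
lemma exists_sum_log_absNorm_div_sq_le :
    ∃ C : ℝ, ∀ x : ℝ,
      ∑ p ∈ primesLE K x, Real.log (absNorm p) / (absNorm p : ℝ) ^ 2 ≤ C := by
  obtain ⟨B, -, h⟩ := exists_sum_absNorm_rpow_neg_le K (s := 3 / 2) (by norm_num)
  refine ⟨2 * (B * (1 / 2) ^ (1 - 3 / 2 : ℝ)), fun x => ?_⟩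
  have htail := h (1 / 2) (by norm_num) (primesLE K x) fun p hp =>
    have hp := (mem_primesLE.1 hp).1
    ⟨hp.ne_zero, by linarith [two_le_absNorm_of_prime hp]⟩
  refine le_trans ?_ (mul_le_mul_of_nonneg_left htail two_pos.le)
  rw [Finset.mul_sum]
  refine Finset.sum_le_sum fun p hp => ?_
  have hN : (0 : ℝ) < absNorm p := by linarith [two_le_absNorm_of_prime (mem_primesLE.1 hp).1]
  have hlog := Real.log_le_rpow_div hN.le (one_half_pos (α := ℝ))
  have hexp : (absNorm p : ℝ) ^ (-(3 / 2) : ℝ) * (absNorm p : ℝ) ^ 2 =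
      (absNorm p : ℝ) ^ (1 / 2 : ℝ) := by
    rw [← Real.rpow_natCast, ← Real.rpow_add hN]
    norm_num
  rw [div_le_iff₀ (by positivity), mul_assoc, hexp]
  linarith

variable (K) in
lemma exists_abs_sum_log_absNorm_sub_sum_primesLE_le :
    ∃ C : ℝ, ∀ x : ℝ, 0 < x →
      |∑ I ∈ idealsLE K x, Real.log (absNorm I) -
        kappaK K * x * ∑ p ∈ primesLE K x, Real.log (absNorm p) / absNorm p| ≤ C * x := by
  obtain ⟨C, C', δ, hC, hC', hδ, hδ₁, h⟩ := exists_abs_exponentSum_sub_le K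
  obtain ⟨D, -, hweighted⟩ := exists_sum_mul_div_rpow_le (F := primesLE K) (P := Prime)
    (N := fun p => (absNorm p : ℝ)) (w := fun p => Real.log (absNorm p)) (fun _ _ => mem_primesLE)
    (fun p hp => one_le_absNorm hp.ne_zero) (fun p _ => Real.log_natCast_nonneg _)
    (by positivity : 0 ≤ Module.finrank ℤ (𝓞 K) * Real.log 4)
    (fun x hx => sum_log_absNorm_primesLE_le K hx.le) (sub_nonneg.2 hδ₁.le) (sub_lt_self 1 hδ)
  obtain ⟨E, hsq⟩ := exists_sum_log_absNorm_div_sq_le K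
  refine ⟨C * D + C' * E, fun x hx => ?_⟩
  rw [sum_log_absNorm_eq_sum_exponentSum, Finset.mul_sum, ← Finset.sum_sub_distrib]
  calc _ ≤ ∑ p ∈ primesLE K x, |exponentSum p x * Real.log (absNorm p) -
          kappaK K * x * (Real.log (absNorm p) / absNorm p)| := Finset.abs_sum_le_sum_abs _ _
    _ ≤ ∑ p ∈ primesLE K x, (C * (Real.log (absNorm p) * (x / absNorm p) ^ (1 - δ)) +
          C' * x * (Real.log (absNorm p) / (absNorm p : ℝ) ^ 2)) := by
        refine Finset.sum_le_sum fun p hp => ?_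
        have hlog : 0 ≤ Real.log (absNorm p) := Real.log_natCast_nonneg _
        rw [show exponentSum p x * Real.log (absNorm p) -
          kappaK K * x * (Real.log (absNorm p) / absNorm p) =
            (exponentSum p x - kappaK K * (x / absNorm p)) * Real.log (absNorm p) by ring,
          abs_mul, abs_of_nonneg hlog]
        refine (mul_le_mul_of_nonneg_right (h p (mem_primesLE.1 hp).1 x hx) hlog).trans_eq ?_
        ring
    _ ≤ C * (D * x) + C' * x * E := by
        rw [Finset.sum_add_distrib, ← Finset.mul_sum, ← Finset.mul_sum]
        gcongr
        · exact hweighted x hx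
        · exact hsq x
    _ = (C * D + C' * E) * x := by ring

variable (K) in
lemma exists_abs_card_idealsLE_mul_log_sub_le :
    ∃ C : ℝ, ∀ x : ℝ, 1 ≤ x →
      |(idealsLE K x).card * Real.log x - kappaK K * x * Real.log x| ≤ C * x := by
  obtain ⟨C, δ, hC, hδ, -, h⟩ := exists_abs_card_idealsLE_sub_le K
  refine ⟨C / δ, fun x hx1 => ?_⟩
  have hx : 0 < x := by linarith
  have hlog := Real.log_nonneg hx1
  rw [← sub_mul, abs_mul, abs_of_nonneg hlog]
  calc _ ≤ C * x ^ (1 - δ) * (x ^ δ / δ) := by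
        gcongr
        · exact h x hx
        · exact Real.log_le_rpow_div hx.le hδ
    _ = C / δ * (x ^ (1 - δ) * x ^ δ) := by ring
    _ = C / δ * x := by rw [← Real.rpow_add hx, sub_add_cancel, Real.rpow_one]

variable (K) in
lemma exists_abs_sum_log_absNorm_sub_mul_log_le :
    ∃ C : ℝ, ∀ x : ℝ, 1 ≤ x →
      |∑ I ∈ idealsLE K x, Real.log (absNorm I) - kappaK K * x * Real.log x| ≤ C * x := by
  obtain ⟨C, hcard⟩ := exists_abs_card_idealsLE_mul_log_sub_le K
  obtain ⟨D, -, hsqrt⟩ := exists_sum_div_absNorm_rpow_le K (a := 1 / 2) (by norm_num)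
    (by norm_num)
  refine ⟨C + 2 * D, fun x hx1 => ?_⟩
  have hx : 0 < x := by linarith
  have hsplit : ∑ I ∈ idealsLE K x, Real.log (absNorm I) =
      (idealsLE K x).card * Real.log x - ∑ I ∈ idealsLE K x, Real.log (x / absNorm I) := by
    rw [← nsmul_eq_mul, ← Finset.sum_const, ← Finset.sum_sub_distrib]
    refine Finset.sum_congr rfl fun I hI => ?_
    rw [Real.log_div hx.ne' (by linarith [one_le_absNorm (mem_idealsLE.1 hI).1]), sub_sub_cancel]
  have hnonneg : 0 ≤ ∑ I ∈ idealsLE K x, Real.log (x / absNorm I) :=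
    Finset.sum_nonneg fun I hI => Real.log_nonneg <|
      (one_le_div (by linarith [one_le_absNorm (mem_idealsLE.1 hI).1])).2 (mem_idealsLE.1 hI).2
  have hle : ∑ I ∈ idealsLE K x, Real.log (x / absNorm I) ≤ 2 * (D * x) := by
    refine le_trans ?_ (mul_le_mul_of_nonneg_left (hsqrt x hx) two_pos.le)
    rw [Finset.mul_sum]
    refine Finset.sum_le_sum fun I _ => ?_
    have := Real.log_le_rpow_div (x := x / absNorm I) (by positivity) (one_half_pos (α := ℝ))
    linarith
  have hmain := abs_le.1 (hcard x hx1)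
  rw [hsplit]
  exact abs_le.2 ⟨by linarith, by linarith⟩

variable (K) in
lemma exists_abs_sum_log_absNorm_div_sub_log_le :
    ∃ C : ℝ, ∀ x : ℝ, 1 ≤ x →
      |∑ p ∈ primesLE K x, Real.log (absNorm p) / absNorm p - Real.log x| ≤ C := by
  obtain ⟨C₁, h₁⟩ := exists_abs_sum_log_absNorm_sub_sum_primesLE_le K
  obtain ⟨C₂, h₂⟩ := exists_abs_sum_log_absNorm_sub_mul_log_le K
  have hκ := kappaK_pos K
  refine ⟨(C₁ + C₂) / kappaK K, fun x hx1 => ?_⟩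
  have hx : 0 < x := by linarith
  set L := ∑ I ∈ idealsLE K x, Real.log (absNorm I)
  set S := ∑ p ∈ primesLE K x, Real.log (absNorm p) / absNorm p
  have htriangle : kappaK K * x * |S - Real.log x| ≤ (C₁ + C₂) * x := by
    nth_rw 1 [← abs_of_pos (mul_pos hκ hx)]
    rw [← abs_mul, mul_sub, add_mul]
    refine (abs_sub_le _ L _).trans (add_le_add ?_ (h₂ x hx1))
    rw [abs_sub_comm]
    exact h₁ x hx
  rw [le_div_iff₀ hκ]
  exact le_of_mul_le_mul_right (by linarith) hx

end MertensFirst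

section MertensSecond

open MeasureTheory

variable {x y : ℝ}

lemma intervalIntegrable_inv_div_log_pow (hx : 1 < x) (hxy : x ≤ y) (n : ℕ) :
    IntervalIntegrable (fun t : ℝ => t⁻¹ / Real.log t ^ n) volume x y := by
  have hpos : ∀ t ∈ Set.uIcc x y, t ≠ 0 ∧ Real.log t ^ n ≠ 0 := fun t ht => by
    rw [Set.uIcc_of_le hxy] at ht
    exact ⟨by linarith [ht.1], pow_ne_zero n (Real.log_pos (hx.trans_le ht.1)).ne'⟩
  exact ContinuousOn.intervalIntegrable (by fun_prop (disch := grind))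

lemma abs_integral_inv_div_log_sq_mul_sub_le {S : ℝ → ℝ} {C : ℝ} (hx : 1 < x) (hxy : x ≤ y)
    (hS : ∀ t, 1 ≤ t → |S t - Real.log t| ≤ C)
    (hint : IntervalIntegrable (fun t => t⁻¹ / Real.log t ^ 2 * S t) volume x y) :
    |(∫ t in x..y, t⁻¹ / Real.log t ^ 2 * S t) -
        (Real.log (Real.log y) - Real.log (Real.log x))| ≤
      C * ((Real.log x)⁻¹ - (Real.log y)⁻¹) := by
  have hlog : IntervalIntegrable (fun t => t⁻¹ / Real.log t) volume x y := by
    simpa using intervalIntegrable_inv_div_log_pow hx hxy 1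
  rw [← integral_inv_div_log hx (hx.trans_le hxy), ← intervalIntegral.integral_sub hint hlog,
    ← integral_inv_div_log_sq hx (hx.trans_le hxy), ← intervalIntegral.integral_const_mul]
  rw [← Real.norm_eq_abs]
  refine intervalIntegral.norm_integral_le_of_norm_le hxy (ae_of_all _ fun t ht => ?_)
    ((intervalIntegrable_inv_div_log_pow hx hxy 2).const_mul C)
  have ht : 1 < t := hx.trans ht.1
  have hlogt := Real.log_pos ht
  rw [show t⁻¹ / Real.log t ^ 2 * S t - t⁻¹ / Real.log t =
    (S t - Real.log t) * (t⁻¹ / Real.log t ^ 2) by field_simp, norm_mul, Real.norm_eq_abs,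
    Real.norm_of_nonneg (by positivity)]
  exact mul_le_mul_of_nonneg_right (hS t ht.le) (by positivity)

lemma abs_div_log_sub_one_le {s t C : ℝ} (ht : 1 < t) (h : |s - Real.log t| ≤ C) :
    |(Real.log t)⁻¹ * s - 1| ≤ C * (Real.log t)⁻¹ := by
  have hlog := Real.log_pos ht
  rw [show (Real.log t)⁻¹ * s - 1 = (s - Real.log t) * (Real.log t)⁻¹ by field_simp, abs_mul,
    abs_of_pos (inv_pos.2 hlog)]
  gcongr

lemma abs_sum_inv_log_mul_sub_le {c : ℕ → ℝ} {C : ℝ}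
    (hc : ∀ t : ℝ, 1 ≤ t → |∑ k ∈ Finset.Icc 0 ⌊t⌋₊, c k - Real.log t| ≤ C) (hx : 1 < x)
    (hxy : x ≤ y) :
    |∑ k ∈ Finset.Ioc ⌊x⌋₊ ⌊y⌋₊, (Real.log k)⁻¹ * c k -
      (Real.log (Real.log y) - Real.log (Real.log x))| ≤ 2 * C / Real.log x := by
  have hderiv (t : ℝ) : deriv (fun t => (Real.log t)⁻¹) t = -(t⁻¹ / Real.log t ^ 2) := by
    rw [Real.deriv_inv_log_apply, neg_div]
  have hdiff : ∀ t ∈ Set.Icc x y, DifferentiableAt ℝ (fun t => (Real.log t)⁻¹) t := fun t ht =>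
    Real.differentiableOn_inv_log.differentiableAt (Ioi_mem_nhds (hx.trans_le ht.1))
  have hint : IntegrableOn (deriv fun t => (Real.log t)⁻¹) (Set.Icc x y) := by
    simp only [funext hderiv]
    exact ((intervalIntegrable_iff_integrableOn_Icc_of_le hxy).1
      (intervalIntegrable_inv_div_log_pow hx hxy 2)).neg
  have hmul : IntervalIntegrable
      (fun t => t⁻¹ / Real.log t ^ 2 * ∑ k ∈ Finset.Icc 0 ⌊t⌋₊, c k) volume x y := by
    rw [intervalIntegrable_iff_integrableOn_Icc_of_le hxy]
    simpa [hderiv] using (integrableOn_mul_sum_Icc c (m := 0) (by linarith) hint).neg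
  rw [sum_mul_eq_sub_sub_integral_mul c (f := fun t => (Real.log t)⁻¹) (by linarith) hxy hdiff
    hint, div_eq_mul_inv]
  simp only [hderiv, neg_mul, integral_neg]
  rw [← intervalIntegral.integral_of_le hxy]
  have hmain := abs_le.1 (abs_integral_inv_div_log_sq_mul_sub_le hx hxy hc hmul)
  have hleft := abs_le.1 (abs_div_log_sub_one_le hx (hc x hx.le))
  have hright := abs_le.1 (abs_div_log_sub_one_le (hx.trans_le hxy) (hc y (hx.le.trans hxy)))
  exact abs_le.2 ⟨by linarith, by linarith⟩

variable {K : Type*} [Field K] [NumberField K]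

variable (K) in
/-- The number of prime ideals of norm `n`. -/
def primeCount (n : ℕ) : ℕ :=
  ((primesLE K n).filter fun p => absNorm p = n).card

lemma sum_primesLE_eq_sum_primeCount_mul (g : ℕ → ℝ) (hx : 0 ≤ x) :
    ∑ p ∈ primesLE K x, g (absNorm p) = ∑ n ∈ Finset.Icc 0 ⌊x⌋₊, primeCount K n * g n := by
  rw [← Finset.sum_fiberwise_of_maps_to (t := Finset.Icc 0 ⌊x⌋₊) (g := fun p => absNorm p)
    fun p hp => Finset.mem_Icc.2 ⟨zero_le, Nat.le_floor (mem_primesLE.1 hp).2⟩]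
  refine Finset.sum_congr rfl fun n hn => ?_
  have hnx : (n : ℝ) ≤ x := (Nat.le_floor_iff hx).1 (Finset.mem_Icc.1 hn).2
  have hfiber : (primesLE K x).filter (fun p => absNorm p = n) =
      (primesLE K n).filter fun p => absNorm p = n := by
    ext p
    simp only [Finset.mem_filter, mem_primesLE]
    exact ⟨fun h => ⟨⟨h.1.1, h.2.symm ▸ le_rfl⟩, h.2⟩, fun h => ⟨⟨h.1.1, h.1.2.trans hnx⟩, h.2⟩⟩
  rw [hfiber, Finset.sum_congr rfl fun p hp => by rw [(Finset.mem_filter.1 hp).2],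
    Finset.sum_const, nsmul_eq_mul, primeCount]

lemma sum_inv_absNorm_sub_sum_inv_absNorm (hx : 1 < x) (hxy : x ≤ y) :
    ∑ p ∈ primesLE K y, (1 / absNorm p : ℝ) - ∑ p ∈ primesLE K x, (1 / absNorm p : ℝ) =
      ∑ n ∈ Finset.Ioc ⌊x⌋₊ ⌊y⌋₊, (Real.log n)⁻¹ * (primeCount K n * (Real.log n / n)) := by
  have hx0 : 0 ≤ x := by linarith
  have hIoc : Finset.Icc 0 ⌊y⌋₊ \ Finset.Icc 0 ⌊x⌋₊ = Finset.Ioc ⌊x⌋₊ ⌊y⌋₊ := by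
    ext n
    simp only [Finset.mem_sdiff, Finset.mem_Icc, Finset.mem_Ioc]
    lia
  rw [sum_primesLE_eq_sum_primeCount_mul (fun n => 1 / (n : ℝ)) hx0,
    sum_primesLE_eq_sum_primeCount_mul (fun n => 1 / (n : ℝ)) (hx0.trans hxy),
    ← Finset.sum_sdiff_eq_sub (Finset.Icc_subset_Icc_right (Nat.floor_mono hxy)), hIoc]
  refine Finset.sum_congr rfl fun n hn => ?_
  have hn : (1 : ℝ) < n := Nat.one_lt_cast.2
    ((Nat.one_le_floor_iff x |>.2 hx.le).trans_lt (Finset.mem_Ioc.1 hn).1)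
  have hlog := (Real.log_pos hn).ne'
  field_simp

variable (K) in
lemma exists_abs_sum_inv_absNorm_sub_log_log_sub_le :
    ∃ C : ℝ, ∀ x y : ℝ, 1 < x → x ≤ y →
      |(∑ p ∈ primesLE K y, (1 / absNorm p : ℝ) - Real.log (Real.log y)) -
        (∑ p ∈ primesLE K x, (1 / absNorm p : ℝ) - Real.log (Real.log x))| ≤ C / Real.log x := by
  obtain ⟨C, h⟩ := exists_abs_sum_log_absNorm_div_sub_log_le K
  refine ⟨2 * C, fun x y hx hxy => ?_⟩
  rw [sub_sub_sub_comm, sum_inv_absNorm_sub_sum_inv_absNorm hx hxy]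
  refine abs_sum_inv_log_mul_sub_le (fun t ht => ?_) hx hxy
  rw [← sum_primesLE_eq_sum_primeCount_mul (fun n => Real.log n / n) (by linarith)]
  exact h t ht

lemma finsum_isPrime_eq_sum_primesLE (f : Ideal (𝓞 K) → ℝ) (x : ℝ) :
    ∑ᶠ p ∈ {p : Ideal (𝓞 K) | p.IsPrime ∧ p ≠ ⊥ ∧ (absNorm p : ℝ) ≤ x}, f p =
      ∑ p ∈ primesLE K x, f p := by
  rw [← finsum_mem_coe_finset]
  refine finsum_mem_congr (Set.ext fun p => ?_) fun _ _ => rfl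
  rw [Finset.mem_coe, mem_primesLE, Set.mem_ofPred_eq, ← and_assoc]
  exact and_congr_left fun _ =>
    ⟨fun h => (Ideal.prime_iff_isPrime h.2).2 h.1, fun h => ⟨Ideal.isPrime_of_prime h, h.ne_zero⟩⟩

lemma MertensK.exists_abs_sum_inv_absNorm_sub_log_log_le {A : ℝ} (hA : MertensK K A) :
    ∃ C : ℝ, ∀ x : ℝ, 1 < x →
      |∑ p ∈ primesLE K x, (1 / absNorm p : ℝ) - Real.log (Real.log x) - A| ≤ C / Real.log x := by
  obtain ⟨C, h⟩ := exists_abs_sum_inv_absNorm_sub_log_log_sub_le K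
  refine ⟨C, fun x hx => ?_⟩
  simp only [MertensK, finsum_isPrime_eq_sum_primesLE] at hA
  rw [abs_sub_comm]
  exact le_of_tendsto (hA.sub_const _).abs
    ((eventually_ge_atTop x).mono fun y hy => h x y hx hy)

end MertensSecond

section Sieve

variable {K : Type*} [Field K] {ι : Type*}

/-- The ideals divisible by none of the moduli `q i`, `i ∈ s`. -/
def sifted (s : Finset ι) (q : ι → Ideal (𝓞 K)) : Set (Ideal (𝓞 K)) :=
  {I | ∀ i ∈ s, ¬ q i ∣ I}

variable {s : Finset ι} {q : ι → Ideal (𝓞 K)} {J : Ideal (𝓞 K)} {i : ι}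

lemma mem_sifted_insert [DecidableEq ι] {I : Ideal (𝓞 K)} :
    I ∈ sifted (insert i s) q ↔ ¬ q i ∣ I ∧ I ∈ sifted s q :=
  Finset.forall_mem_insert i s _

lemma indicator_sifted_insert_inter_dvd [DecidableEq ι] (f : Ideal (𝓞 K) → ℝ) (hJ : J ∣ q i) :
    (sifted (insert i s) q ∩ {I | J ∣ I}).indicator f =
      (sifted s q ∩ {I | J ∣ I}).indicator f - (sifted s q ∩ {I | q i ∣ I}).indicator f := by
  have hdisj : Disjoint (sifted (insert i s) q ∩ {I | J ∣ I}) (sifted s q ∩ {I | q i ∣ I}) :=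
    Set.disjoint_left.2 fun I h h' => (mem_sifted_insert.1 h.1).1 h'.2
  refine eq_sub_of_add_eq ((Set.indicator_union_of_disjoint hdisj f).symm.trans
    (congrArg (Set.indicator · f) (Set.ext fun I => ?_)))
  simp only [Set.mem_union, Set.mem_inter_iff, mem_sifted_insert, Set.mem_ofPred_eq]
  have := hJ.trans (c := I)
  tauto

variable [NumberField K]

lemma mul_mem_sifted_iff (hJ : ∀ i ∈ s, IsRelPrime (q i) J) {I : Ideal (𝓞 K)} :
    J * I ∈ sifted s q ↔ I ∈ sifted s q :=
  forall₂_congr fun i hi => not_congr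
    ⟨(hJ i hi).dvd_of_dvd_mul_left, fun h => h.mul_left J⟩

variable (s q) in
/-- The number of nonzero ideals of norm at most `x` in `sifted s q`, as a real number. -/
def siftedCount (x : ℝ) : ℝ :=
  ∑ I ∈ idealsLE K x, (sifted s q).indicator 1 I

lemma sum_indicator_sifted_inter_dvd (hJ₀ : J ≠ ⊥) (hJ : ∀ i ∈ s, IsRelPrime (q i) J) (x : ℝ) :
    ∑ I ∈ idealsLE K x, (sifted s q ∩ {I | J ∣ I}).indicator 1 I =
      siftedCount s q (x / absNorm J) := by
  classical
  rw [sum_idealsLE_eq_sum_mul_left hJ₀ x fun I hI => Set.indicator_of_notMem (fun h => hI h.2) _]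
  refine Finset.sum_congr rfl fun I _ => ?_
  simp only [Set.indicator_apply, Set.mem_inter_iff, mul_mem_sifted_iff hJ, Set.mem_ofPred_eq,
    dvd_mul_right, and_true, Pi.one_apply]

lemma sum_indicator_sifted_insert_inter_dvd [DecidableEq ι] (hi₀ : q i ≠ ⊥)
    (hi : ∀ j ∈ s, IsRelPrime (q j) (q i)) (hJ : J ∣ q i) (x : ℝ) :
    ∑ I ∈ idealsLE K x, (sifted (insert i s) q ∩ {I | J ∣ I}).indicator 1 I =
      siftedCount s q (x / absNorm J) - siftedCount s q (x / absNorm (q i)) := by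
  have hJ₀ : J ≠ ⊥ := ne_zero_of_dvd_ne_zero hi₀ hJ
  simp only [indicator_sifted_insert_inter_dvd 1 hJ, Pi.sub_apply, Finset.sum_sub_distrib]
  rw [sum_indicator_sifted_inter_dvd hJ₀ fun j hj => (hi j hj).of_dvd_right hJ,
    sum_indicator_sifted_inter_dvd hi₀ hi]

lemma siftedCount_insert [DecidableEq ι] (hi₀ : q i ≠ ⊥)
    (hi : ∀ j ∈ s, IsRelPrime (q j) (q i)) (x : ℝ) :
    siftedCount (insert i s) q x = siftedCount s q x - siftedCount s q (x / absNorm (q i)) := by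
  simpa [siftedCount] using sum_indicator_sifted_insert_inter_dvd hi₀ hi (one_dvd _) x

lemma abs_siftedCount_sub_le {κ C a : ℝ} (hq₀ : ∀ i ∈ s, q i ≠ ⊥)
    (hq : (s : Set ι).Pairwise fun i j => IsRelPrime (q i) (q j))
    (hcount : ∀ x : ℝ, 0 < x → |((idealsLE K x).card : ℝ) - κ * x| ≤ C * x ^ a) :
    ∀ x : ℝ, 0 < x → |siftedCount s q x - κ * x * ∏ i ∈ s, (1 - 1 / (absNorm (q i) : ℝ))| ≤
      C * x ^ a * ∏ i ∈ s, (1 + (absNorm (q i) : ℝ) ^ (-a)) := by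
  classical
  induction s using Finset.induction_on with
  | empty => simpa [siftedCount, sifted] using hcount
  | insert i s hi ih =>
    intro x hx
    rw [Finset.coe_insert, Set.pairwise_insert_of_notMem (Finset.mem_coe.not.2 hi)] at hq
    rw [Finset.forall_mem_insert] at hq₀
    have hN : (0 : ℝ) < absNorm (q i) := by linarith [one_le_absNorm hq₀.1]
    have hfull := ih hq₀.2 hq.1 x hx
    have hmultiples := ih hq₀.2 hq.1 (x / absNorm (q i)) (by positivity)
    rw [Real.div_rpow hx.le hN.le, div_eq_mul_inv (x ^ a), ← Real.rpow_neg hN.le] at hmultiples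
    rw [siftedCount_insert hq₀.1 fun j hj => (hq.2 j hj).2, Finset.prod_insert hi,
      Finset.prod_insert hi]
    calc _ = |(siftedCount s q x - κ * x * ∏ i ∈ s, (1 - 1 / (absNorm (q i) : ℝ))) -
          (siftedCount s q (x / absNorm (q i)) -
            κ * (x / absNorm (q i)) * ∏ i ∈ s, (1 - 1 / (absNorm (q i) : ℝ)))| := by
          congr 1; ring
      _ ≤ _ := (abs_sub _ _).trans (add_le_add hfull hmultiples)
      _ = _ := by ring

lemma hasSum_indicator_sifted {f : Ideal (𝓞 K) → ℝ} {Z : ℝ} (hf : HasSum f Z)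
    (hf_mul : ∀ I J, f (I * J) = f I * f J) (hq₀ : ∀ i ∈ s, q i ≠ ⊥)
    (hq : (s : Set ι).Pairwise fun i j => IsRelPrime (q i) (q j)) :
    HasSum ((sifted s q).indicator f) (Z * ∏ i ∈ s, (1 - f (q i))) := by
  classical
  induction s using Finset.induction_on with
  | empty => simpa [sifted] using hf
  | insert i s hi ih =>
    rw [Finset.coe_insert, Set.pairwise_insert_of_notMem (Finset.mem_coe.not.2 hi)] at hq
    rw [Finset.forall_mem_insert] at hq₀
    have hs := ih hq₀.2 hq.1
    have hmultiples : HasSum ((sifted s q ∩ {I | q i ∣ I}).indicator f)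
        (f (q i) * (Z * ∏ i ∈ s, (1 - f (q i)))) := by
      rw [← (mul_right_injective₀ (show q i ≠ 0 from hq₀.1)).hasSum_iff]
      · refine (hs.mul_left (f (q i))).congr_fun fun I => ?_
        simp [Set.indicator_apply, mul_mem_sifted_iff fun j hj => (hq.2 j hj).2, hf_mul]
      · exact fun I hI => Set.indicator_of_notMem (fun h => hI (h.2.imp fun _ => Eq.symm)) _
    have hinsert := indicator_sifted_insert_inter_dvd (s := s) f (one_dvd (q i))
    simp only [one_dvd, Set.ofPred_true, Set.inter_univ] at hinsert
    rw [hinsert, Finset.prod_insert hi, mul_left_comm, one_sub_mul]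
    exact hs.sub hmultiples

end Sieve

section EulerProduct

lemma abs_tsum_sub_sum_le {ι : Type*} {f : ι → ℝ} {s : Finset ι} {b : ℝ} (hf : ∀ i, 0 ≤ f i)
    (hb : ∀ t : Finset ι, Disjoint t s → ∑ i ∈ t, f i ≤ b) :
    |∑' i, f i - ∑ i ∈ s, f i| ≤ b := by
  classical
  have hbound : ∀ t : Finset ι, ∑ i ∈ t, f i ≤ b + ∑ i ∈ s, f i := fun t =>
    calc ∑ i ∈ t, f i ≤ ∑ i ∈ t \ s ∪ s, f i :=
          Finset.sum_le_sum_of_subset_of_nonneg (by simp) fun i _ _ => hf i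
      _ = ∑ i ∈ t \ s, f i + ∑ i ∈ s, f i := Finset.sum_union Finset.sdiff_disjoint
      _ ≤ b + ∑ i ∈ s, f i := by gcongr; exact hb _ Finset.sdiff_disjoint
  have hsum := summable_of_sum_le hf hbound
  rw [abs_of_nonneg (sub_nonneg.2 (hsum.sum_le_tsum s fun i _ => hf i)), sub_le_iff_le_add]
  exact hsum.tsum_le_of_sum_le hbound

variable (K : Type*) [Field K] [NumberField K] {h : ℕ}

lemma summable_inv_absNorm_pow (hh : 2 ≤ h) :
    Summable fun I : Ideal (𝓞 K) => ((absNorm I : ℝ) ^ h)⁻¹ := by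
  classical
  obtain ⟨B, -, hB⟩ := exists_sum_absNorm_rpow_neg_le K (s := h) (by exact_mod_cast hh)
  refine summable_of_sum_le (c := B * (1 / 2) ^ (1 - (h : ℝ))) (fun I => by positivity) fun T => ?_
  have hbot : ∀ I ∈ T, I ∉ T.erase ⊥ → ((absNorm I : ℝ) ^ h)⁻¹ = 0 := fun I hI hI' => by
    obtain rfl : I = ⊥ := by simpa [hI] using hI'
    simp [show h ≠ 0 by lia]
  rw [← Finset.sum_subset (T.erase_subset ⊥) hbot]
  simp only [← Real.rpow_natCast, ← Real.rpow_neg (Nat.cast_nonneg _)]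
  exact hB _ (by norm_num) _ fun I hI =>
    ⟨Finset.ne_of_mem_erase hI, by linarith [one_le_absNorm (Finset.ne_of_mem_erase hI)]⟩

lemma hasSum_zetaK (hh : 2 ≤ h) :
    HasSum (fun I : Ideal (𝓞 K) => ((absNorm I : ℝ) ^ h)⁻¹) (zetaK K h) := by
  have hsupp : Function.support (fun I : Ideal (𝓞 K) => ((absNorm I : ℝ) ^ h)⁻¹) ⊆
      {I | I ≠ ⊥} := fun I hI hbot => hI (by simp [show I = ⊥ from hbot, show h ≠ 0 by lia])
  simp only [zetaK, one_div]
  exact (tsum_subtype_eq_of_support_subset hsupp).symm ▸ (summable_inv_absNorm_pow K hh).hasSum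

lemma one_le_zetaK (hh : 2 ≤ h) : 1 ≤ zetaK K h := by
  simpa using le_hasSum (hasSum_zetaK K hh) ⊤ fun I _ => by positivity

variable {K}

lemma isRelPrime_pow_of_prime_of_ne {p q : Ideal (𝓞 K)} (hp : Prime p) (hq : Prime q)
    (hpq : p ≠ q) (m n : ℕ) : IsRelPrime (p ^ m) (q ^ n) :=
  (hp.irreducible.isRelPrime_iff_not_dvd.2 fun hdvd =>
    hpq (associated_iff_eq.1 ((hp.dvd_prime_iff_associated hq).1 hdvd))).pow

lemma lt_absNorm_of_mem_sifted_primesLE {I : Ideal (𝓞 K)} {x : ℝ} (hI₀ : I ≠ ⊥) (hI₁ : I ≠ ⊤)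
    (hI : I ∈ sifted (primesLE K x) id) : x < absNorm I := by
  obtain ⟨p, hp, hpI⟩ := WfDvdMonoid.exists_irreducible_factor (mt Ideal.isUnit_iff.1 hI₁) hI₀
  by_contra! hle
  refine hI p (mem_primesLE.2 ⟨hp.prime, le_trans ?_ hle⟩) hpI
  exact_mod_cast absNorm_le_absNorm_of_dvd hI₀ hpI

lemma sum_indicator_sifted_primesLE_le (hh : h ≠ 0) {b x : ℝ} {T : Finset (Ideal (𝓞 K))}
    (hb : ∀ S : Finset (Ideal (𝓞 K)), (∀ I ∈ S, I ≠ ⊥ ∧ x < absNorm I) →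
      ∑ I ∈ S, (absNorm I : ℝ) ^ (-(h : ℝ)) ≤ b) (hT : ⊤ ∉ T) :
    ∑ I ∈ T, (sifted (primesLE K x) id).indicator (fun I => ((absNorm I : ℝ) ^ h)⁻¹) I ≤ b := by
  classical
  have hzero : ∀ I ∈ T, I ∉ T.filter (fun I => I ≠ ⊥ ∧ I ∈ sifted (primesLE K x) id) →
      (sifted (primesLE K x) id).indicator (fun I => ((absNorm I : ℝ) ^ h)⁻¹) I = 0 := by
    intro I hI hI'
    by_cases hbot : I = ⊥
    · simp [hbot, Set.indicator_apply, hh]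
    · exact Set.indicator_of_notMem (fun hmem => hI' (Finset.mem_filter.2 ⟨hI, hbot, hmem⟩)) _
  rw [← Finset.sum_subset (Finset.filter_subset _ T) hzero]
  refine le_of_eq_of_le (Finset.sum_congr rfl fun I hI => ?_) (hb _ fun I hI => ?_)
  · rw [Set.indicator_of_mem (Finset.mem_filter.1 hI).2.2, Real.rpow_neg (Nat.cast_nonneg _),
      Real.rpow_natCast]
  · obtain ⟨hIT, hI₀, hI⟩ := Finset.mem_filter.1 hI
    exact ⟨hI₀, lt_absNorm_of_mem_sifted_primesLE hI₀ (fun hI₁ => hT (hI₁ ▸ hIT)) hI⟩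

variable (K) in
lemma exists_abs_zetaK_mul_prod_sub_one_le (hh : 2 ≤ h) :
    ∃ B : ℝ, 0 ≤ B ∧ ∀ x : ℝ, 0 < x →
      |zetaK K h * ∏ p ∈ primesLE K x, (1 - ((absNorm p : ℝ) ^ h)⁻¹) - 1| ≤
        B * x ^ (1 - (h : ℝ)) := by
  obtain ⟨B, hB₀, hB⟩ := exists_sum_absNorm_rpow_neg_le K (s := h) (by exact_mod_cast hh)
  refine ⟨B, hB₀, fun x hx => ?_⟩
  have hprime : ∀ p ∈ primesLE K x, Prime p := fun p hp => (mem_primesLE.1 hp).1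
  have hsum := hasSum_indicator_sifted (q := id) (hasSum_zetaK K hh)
    (fun I J => by simp [mul_pow, mul_comm]) (fun p hp => (hprime p hp).ne_zero)
    fun p hp q hq hpq => by
      simpa using isRelPrime_pow_of_prime_of_ne (hprime p hp) (hprime q hq) hpq 1 1
  have htop : ⊤ ∈ sifted (primesLE K x) id := fun p hp hdvd =>
    (hprime p hp).not_isUnit (isUnit_of_dvd_one (Ideal.one_eq_top (R := 𝓞 K) ▸ hdvd))
  have htail := abs_tsum_sub_sum_le (s := {⊤}) (b := B * x ^ (1 - (h : ℝ)))
    (f := (sifted (primesLE K x) id).indicator fun I => ((absNorm I : ℝ) ^ h)⁻¹)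
    (fun I => Set.indicator_nonneg (fun I _ => by positivity) I) fun T hT =>
      sum_indicator_sifted_primesLE_le (by lia) (hB x hx) (Finset.disjoint_singleton_right.1 hT)
  simpa [hsum.tsum_eq, htop] using htail

variable (K) in
lemma exists_prod_one_add_absNorm_rpow_neg_le {s : ℝ} (hs : 1 < s) :
    ∃ B : ℝ, 0 ≤ B ∧ ∀ T : Finset (Ideal (𝓞 K)), (∀ I ∈ T, I ≠ ⊥) →
      ∏ I ∈ T, (1 + (absNorm I : ℝ) ^ (-s)) ≤ B := by
  obtain ⟨B, -, hB⟩ := exists_sum_absNorm_rpow_neg_le K hs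
  refine ⟨Real.exp (B * (1 / 2) ^ (1 - s)), by positivity, fun T hT => ?_⟩
  calc ∏ I ∈ T, (1 + (absNorm I : ℝ) ^ (-s))
      ≤ ∏ I ∈ T, Real.exp ((absNorm I : ℝ) ^ (-s)) := by
        gcongr with I
        rw [add_comm]
        exact Real.add_one_le_exp _
    _ = Real.exp (∑ I ∈ T, (absNorm I : ℝ) ^ (-s)) := (Real.exp_sum _ _).symm
    _ ≤ _ := Real.exp_le_exp.2 (hB _ (by norm_num) T fun I hI =>
        ⟨hT I hI, by linarith [one_le_absNorm (hT I hI)]⟩)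

end EulerProduct

section HFree

variable {K : Type*} [Field K] [NumberField K] {h : ℕ} {p : Ideal (𝓞 K)} {x : ℝ}

lemma hFreeI_iff_mem_sifted (hh : h ≠ 0) {I : Ideal (𝓞 K)} (hI : I ∈ idealsLE K x) :
    HFreeI h I ↔ I ∈ sifted (primesLE K x) (· ^ h) := by
  rw [mem_idealsLE] at hI
  refine ⟨fun hfree p hp => ?_, fun hsift p hp hp₀ hdvd => ?_⟩
  · have hp := (mem_primesLE.1 hp).1
    exact hfree p (Ideal.isPrime_of_prime hp) hp.ne_zero
  · have hle : (absNorm p : ℝ) ≤ absNorm I := by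
      exact_mod_cast absNorm_le_absNorm_of_dvd hI.1 ((dvd_pow_self p hh).trans hdvd)
    exact hsift p (mem_primesLE.2 ⟨(Ideal.prime_iff_isPrime hp₀).2 hp, hle.trans hI.2⟩) hdvd

/-- The number of `h`-free ideals of norm at most `x` divisible by `p`, as a real number. -/
def hFreeMultipleCount (h : ℕ) (p : Ideal (𝓞 K)) (x : ℝ) : ℝ :=
  ∑ I ∈ idealsLE K x, {I | HFreeI h I ∧ p ∣ I}.indicator 1 I

lemma hFreeMultipleCount_eq_siftedCount_sub [DecidableEq (Ideal (𝓞 K))] (hh : h ≠ 0)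
    (hp : p ∈ primesLE K x) :
    hFreeMultipleCount h p x = siftedCount ((primesLE K x).erase p) (· ^ h) (x / absNorm p) -
      siftedCount ((primesLE K x).erase p) (· ^ h) (x / absNorm (p ^ h)) := by
  have hprime := (mem_primesLE.1 hp).1
  classical
  rw [← sum_indicator_sifted_insert_inter_dvd (q := fun p => p ^ h)
    (pow_ne_zero h hprime.ne_zero) (fun q hq => isRelPrime_pow_of_prime_of_ne
      (mem_primesLE.1 (Finset.mem_of_mem_erase hq)).1 hprime (Finset.ne_of_mem_erase hq) h h)
    (dvd_pow_self p hh), Finset.insert_erase hp]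
  refine Finset.sum_congr rfl fun I hI => ?_
  simp only [Set.indicator_apply, Set.mem_inter_iff, Set.mem_ofPred_eq,
    hFreeI_iff_mem_sifted hh hI]

/-- The summand at a prime ideal of norm `N` in the series subtracted from `𝔄` in `ℭ₁`. -/
def c1Term (h : ℕ) (N : ℝ) : ℝ :=
  (N - 1) / (N * (N ^ h - 1))

section c1Term

variable {N : ℝ}

lemma le_pow_of_two_le (hh : h ≠ 0) (hN : 2 ≤ N) : N ≤ N ^ h :=
  le_self_pow₀ (by linarith) hh

lemma c1Term_nonneg (hN : 1 ≤ N) : 0 ≤ c1Term h N :=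
  div_nonneg (by linarith) (mul_nonneg (by linarith) (by linarith [one_le_pow₀ (n := h) hN]))

lemma c1Term_le_one_div (hh : h ≠ 0) (hN : 2 ≤ N) : c1Term h N ≤ 1 / N := by
  have hpow := le_pow_of_two_le hh hN
  rw [c1Term, div_le_div_iff₀ (mul_pos (by linarith) (by linarith)) (by linarith), one_mul,
    mul_comm N]
  gcongr

lemma c1Term_le (hh : h ≠ 0) (hN : 2 ≤ N) : c1Term h N ≤ 2 * N ^ (-(h : ℝ)) := by
  have hpow := le_pow_of_two_le hh hN
  rw [Real.rpow_neg (by linarith), Real.rpow_natCast, ← div_eq_mul_inv, c1Term,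
    div_le_div_iff₀ (mul_pos (by linarith) (by linarith)) (by linarith)]
  nlinarith

lemma one_div_sub_inv_pow_eq (hh : h ≠ 0) (hN : 2 ≤ N) :
    1 / N - (N ^ h)⁻¹ = (1 - (N ^ h)⁻¹) * (1 / N - c1Term h N) := by
  have hpow := le_pow_of_two_le hh hN
  have : N ^ h - 1 ≠ 0 := by linarith
  have : N ^ h ≠ 0 := by linarith
  rw [c1Term]
  field_simp
  ring

end c1Term

lemma abs_siftedCount_pow_sub_le {κ C a B : ℝ} {s : Finset (Ideal (𝓞 K))} (hC : 0 ≤ C)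
    (hs : ∀ p ∈ s, Prime p)
    (hcount : ∀ x : ℝ, 0 < x → |((idealsLE K x).card : ℝ) - κ * x| ≤ C * x ^ a)
    (hB : ∏ p ∈ s, (1 + (absNorm p : ℝ) ^ (-(h * a))) ≤ B) (hx : 0 < x) :
    |siftedCount s (· ^ h) x - κ * x * ∏ p ∈ s, (1 - ((absNorm p : ℝ) ^ h)⁻¹)| ≤
      C * B * x ^ a := by
  have hsieve := abs_siftedCount_sub_le (q := fun p : Ideal (𝓞 K) => p ^ h)
    (fun p hp => pow_ne_zero h (hs p hp).ne_zero) (fun p hp q hq hpq =>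
      isRelPrime_pow_of_prime_of_ne (hs p hp) (hs q hq) hpq h h) hcount x hx
  simp only [map_pow, Nat.cast_pow, one_div, ← Real.rpow_natCast_mul (Nat.cast_nonneg _),
    mul_neg] at hsieve
  rw [mul_right_comm C]
  exact hsieve.trans (mul_le_mul_of_nonneg_left hB (by positivity))

lemma abs_hFreeMultipleCount_sub_prod_le {κ C a B : ℝ} (hh : h ≠ 0) (hC : 0 ≤ C) (ha : 0 ≤ a)
    (hcount : ∀ x : ℝ, 0 < x → |((idealsLE K x).card : ℝ) - κ * x| ≤ C * x ^ a) (hB₀ : 0 ≤ B)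
    (hB : ∀ s : Finset (Ideal (𝓞 K)), (∀ I ∈ s, I ≠ ⊥) →
      ∏ I ∈ s, (1 + (absNorm I : ℝ) ^ (-(h * a))) ≤ B) (hp : p ∈ primesLE K x) :
    |hFreeMultipleCount h p x - κ * x * (∏ p ∈ primesLE K x, (1 - ((absNorm p : ℝ) ^ h)⁻¹)) *
      (1 / absNorm p - c1Term h (absNorm p))| ≤ 2 * (C * B) * (x / absNorm p) ^ a := by
  classical
  have hN := two_le_absNorm_of_prime (mem_primesLE.1 hp).1
  have hpow := le_pow_of_two_le hh hN
  have hx : 0 < x := by linarith [(mem_primesLE.1 hp).2]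
  have hprime : ∀ q ∈ (primesLE K x).erase p, Prime q := fun q hq =>
    (mem_primesLE.1 (Finset.mem_of_mem_erase hq)).1
  have hsift (y : ℝ) (hy : 0 < y) := abs_siftedCount_pow_sub_le hC hprime hcount
    (hB _ fun q hq => (hprime q hq).ne_zero) hy
  have hone := hsift (x / absNorm p) (by positivity)
  have hhigh := hsift (x / (absNorm p : ℝ) ^ h) (by positivity)
  rw [hFreeMultipleCount_eq_siftedCount_sub hh hp, ← Finset.mul_prod_erase _ _ hp, map_pow,
    Nat.cast_pow]
  set E := ∏ q ∈ (primesLE K x).erase p, (1 - ((absNorm q : ℝ) ^ h)⁻¹)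
  have hmain : κ * x * ((1 - ((absNorm p : ℝ) ^ h)⁻¹) * E) *
      (1 / absNorm p - c1Term h (absNorm p)) =
        κ * (x / absNorm p) * E - κ * (x / (absNorm p : ℝ) ^ h) * E := by
    linear_combination -κ * x * E * one_div_sub_inv_pow_eq hh hN
  have hmono : C * B * (x / (absNorm p : ℝ) ^ h) ^ a ≤ C * B * (x / absNorm p) ^ a := by gcongr
  rw [hmain, sub_sub_sub_comm]
  refine (abs_sub _ _).trans ((add_le_add hone (hhigh.trans hmono)).trans_eq ?_)
  ring

lemma abs_mul_sub_div_mul_le {κ ζ E g b : ℝ} (hκ : 0 ≤ κ) (hζ : 1 ≤ ζ) (hx : 0 ≤ x) (hg : 0 ≤ g)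
    (hE : |ζ * E - 1| ≤ b) : |κ * x * E * g - κ / ζ * (x * g)| ≤ κ * x * g * b := by
  rw [show κ * x * E * g - κ / ζ * (x * g) = κ * x * g * ((ζ * E - 1) / ζ) by field_simp, abs_mul,
    abs_of_nonneg (by positivity : 0 ≤ κ * x * g), abs_div, abs_of_pos (by linarith : 0 < ζ)]
  gcongr
  exact (div_le_self (abs_nonneg _) hζ).trans hE

lemma mul_rpow_one_sub_le_div_rpow {a N g : ℝ} (hh : 2 ≤ h) (ha : 0 ≤ a) (hN : 1 ≤ N)
    (hNx : N ≤ x) (hg : g ≤ 1 / N) : x * g * x ^ (1 - (h : ℝ)) ≤ (x / N) ^ a := by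
  have hh' : (2 : ℝ) ≤ h := by exact_mod_cast hh
  have hx : 0 < x := by linarith
  calc x * g * x ^ (1 - (h : ℝ)) ≤ x * 1 * x ^ (-1 : ℝ) := by
        gcongr
        · exact hg.trans ((div_le_one (by linarith)).2 hN)
        · linarith
        · linarith
    _ = 1 := by rw [Real.rpow_neg_one, mul_one, mul_inv_cancel₀ hx.ne']
    _ ≤ (x / N) ^ a := Real.one_le_rpow ((one_le_div (by linarith)).2 hNx) ha

variable (K) in
lemma exists_abs_hFreeMultipleCount_sub_le (hh : 2 ≤ h) :
    ∃ C a : ℝ, 0 ≤ C ∧ 0 < a ∧ a < 1 ∧ ∀ x, ∀ p ∈ primesLE K x,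
      |hFreeMultipleCount h p x -
          kappaK K / zetaK K h * (x * (1 / absNorm p - c1Term h (absNorm p)))| ≤
        C * (x / absNorm p) ^ a := by
  obtain ⟨C, δ, hC, hδ₀, hδ₁, hcount⟩ := exists_abs_card_idealsLE_sub_le K
  have hh' : (2 : ℝ) ≤ h := by exact_mod_cast hh
  obtain ⟨B, hB₀, hB⟩ :=
    exists_prod_one_add_absNorm_rpow_neg_le K (s := h * (1 - δ)) (by nlinarith)
  obtain ⟨D, hD₀, hD⟩ := exists_abs_zetaK_mul_prod_sub_one_le K hh
  have hκ := (kappaK_pos K).le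
  refine ⟨2 * (C * B) + kappaK K * D, 1 - δ, by positivity, by linarith, by linarith,
    fun x p hp => ?_⟩
  have hN := two_le_absNorm_of_prime (mem_primesLE.1 hp).1
  have hNx := (mem_primesLE.1 hp).2
  have hx : 0 < x := by linarith
  have hcorr := c1Term_nonneg (h := h) (by linarith : (1 : ℝ) ≤ absNorm p)
  have hcorr' := c1Term_le_one_div (by lia : h ≠ 0) hN
  have hsieve := abs_hFreeMultipleCount_sub_prod_le (by lia) hC (by linarith) hcount hB₀ hB hp
  have heuler := abs_mul_sub_div_mul_le hκ (one_le_zetaK K hh) hx.le (sub_nonneg.2 hcorr') (hD x hx)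
  have hsmall := mul_rpow_one_sub_le_div_rpow (a := 1 - δ) hh (by linarith) (by linarith) hNx
    (sub_le_self (1 / (absNorm p : ℝ)) hcorr)
  refine (abs_sub_le _ _ _).trans ((add_le_add hsieve heuler).trans ?_)
  linear_combination kappaK K * D * hsmall

end HFree

section FirstMoment

variable {K : Type*} [Field K] [NumberField K] {h : ℕ}

lemma log_le_mul_log_mul_rpow {N x ε : ℝ} (hε : 0 < ε) (hN : 2 ≤ N) (hNx : N ≤ x) :
    Real.log x ≤ (ε⁻¹ / Real.log 2 + 1) * (Real.log N * (x / N) ^ ε) := by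
  have hN₀ : 0 < N := by linarith
  have hlog₂ : 0 < Real.log 2 := Real.log_pos (by norm_num)
  have hlogN : Real.log 2 ≤ Real.log N := Real.log_le_log (by norm_num) hN
  have hratio : 1 ≤ x / N := (one_le_div hN₀).2 hNx
  have hlog := Real.log_le_rpow_div (by linarith : 0 ≤ x / N) hε
  have hsmall : (x / N) ^ ε / ε ≤ ε⁻¹ / Real.log 2 * (Real.log N * (x / N) ^ ε) :=
    calc (x / N) ^ ε / ε ≤ (x / N) ^ ε / ε * (Real.log N / Real.log 2) :=
          le_mul_of_one_le_right (by positivity) ((one_le_div hlog₂).2 hlogN)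
      _ = ε⁻¹ / Real.log 2 * (Real.log N * (x / N) ^ ε) := by ring
  have hlarge : Real.log N ≤ Real.log N * (x / N) ^ ε :=
    le_mul_of_one_le_right (by linarith) (Real.one_le_rpow hratio hε.le)
  rw [Real.log_div (by linarith) hN₀.ne'] at hlog
  linarith

variable (K) in
lemma exists_sum_primesLE_div_rpow_le {a : ℝ} (ha₀ : 0 ≤ a) (ha₁ : a < 1) :
    ∃ C : ℝ, ∀ x : ℝ, 1 < x →
      ∑ p ∈ primesLE K x, (x / absNorm p) ^ a ≤ C * (x / Real.log x) := by
  obtain ⟨D, -, hsum⟩ := exists_sum_mul_div_rpow_le (F := primesLE K)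
    (N := fun p => (absNorm p : ℝ)) (w := fun p => Real.log (absNorm p)) (a := (a + 1) / 2)
    (fun x p => mem_primesLE) (fun p hp => by linarith [two_le_absNorm_of_prime hp])
    (fun p _ => Real.log_natCast_nonneg _) (by positivity)
    (fun x hx => sum_log_absNorm_primesLE_le K hx.le) (by linarith) (by linarith)
  have hε : 0 < (1 - a) / 2 := by linarith
  refine ⟨(((1 - a) / 2)⁻¹ / Real.log 2 + 1) * D, fun x hx => ?_⟩
  rw [← mul_div_assoc, le_div_iff₀ (Real.log_pos hx), Finset.sum_mul, mul_assoc]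
  refine le_trans ?_ (mul_le_mul_of_nonneg_left (hsum x (by linarith)) (by positivity))
  rw [Finset.mul_sum]
  refine Finset.sum_le_sum fun p hp => ?_
  obtain ⟨hp, hpx⟩ := mem_primesLE.1 hp
  have hN := two_le_absNorm_of_prime hp
  have hratio : 0 < x / absNorm p := by positivity
  calc (x / absNorm p) ^ a * Real.log x
      ≤ (x / absNorm p) ^ a * ((((1 - a) / 2)⁻¹ / Real.log 2 + 1) *
          (Real.log (absNorm p) * (x / absNorm p) ^ ((1 - a) / 2))) := by
        gcongr
        exact log_le_mul_log_mul_rpow hε hN hpx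
    _ = (((1 - a) / 2)⁻¹ / Real.log 2 + 1) * (Real.log (absNorm p) *
          ((x / absNorm p) ^ a * (x / absNorm p) ^ ((1 - a) / 2))) := by ring
    _ = _ := by rw [← Real.rpow_add hratio]; ring_nf

lemma C1K_eq_sub_tsum_indicator (A : ℝ) :
    C1K K h A = A - ∑' p : Ideal (𝓞 K), {p | Prime p}.indicator
      (fun p => c1Term h (absNorm p)) p := by
  have hset : {p : Ideal (𝓞 K) | p.IsPrime ∧ p ≠ ⊥} = {p | Prime p} := Set.ext fun p =>
    ⟨fun hp => (Ideal.prime_iff_isPrime hp.2).2 hp.1,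
      fun hp => ⟨Ideal.isPrime_of_prime hp, hp.ne_zero⟩⟩
  rw [← hset, ← tsum_subtype]
  rfl

lemma sum_indicator_prime_c1Term_le (hh : h ≠ 0) {b x : ℝ} {T : Finset (Ideal (𝓞 K))}
    (hb : ∀ S : Finset (Ideal (𝓞 K)), (∀ I ∈ S, I ≠ ⊥ ∧ x < absNorm I) →
      ∑ I ∈ S, (absNorm I : ℝ) ^ (-(h : ℝ)) ≤ b) (hT : Disjoint T (primesLE K x)) :
    ∑ p ∈ T, {p | Prime p}.indicator (fun p => c1Term h (absNorm p)) p ≤ 2 * b := by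
  classical
  have hlarge : ∀ p ∈ T.filter Prime, p ≠ ⊥ ∧ x < absNorm p := fun p hp => by
    obtain ⟨hpT, hp⟩ := Finset.mem_filter.1 hp
    refine ⟨hp.ne_zero, not_le.1 fun hpx => ?_⟩
    exact Finset.disjoint_left.1 hT hpT (mem_primesLE.2 ⟨hp, hpx⟩)
  calc ∑ p ∈ T, {p | Prime p}.indicator (fun p => c1Term h (absNorm p)) p
      = ∑ p ∈ T.filter Prime, c1Term h (absNorm p) := by
        simp only [Set.indicator_apply, Set.mem_ofPred_eq, Finset.sum_filter]
    _ ≤ ∑ p ∈ T.filter Prime, 2 * (absNorm p : ℝ) ^ (-(h : ℝ)) :=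
        Finset.sum_le_sum fun p hp =>
          c1Term_le hh (two_le_absNorm_of_prime (Finset.mem_filter.1 hp).2)
    _ ≤ 2 * b := by
        rw [← Finset.mul_sum]
        exact mul_le_mul_of_nonneg_left (hb _ hlarge) zero_le_two

variable (K) in
lemma exists_abs_sub_C1K_sub_sum_c1Term_le (hh : 2 ≤ h) (A : ℝ) :
    ∃ B : ℝ, ∀ x : ℝ, 1 < x →
      |A - C1K K h A - ∑ p ∈ primesLE K x, c1Term h (absNorm p)| ≤ B / Real.log x := by
  have hh' : (2 : ℝ) ≤ h := by exact_mod_cast hh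
  obtain ⟨B, hB₀, hB⟩ := exists_sum_absNorm_rpow_neg_le K (s := h) (by linarith)
  refine ⟨2 * B, fun x hx => ?_⟩
  have hnonneg : ∀ p : Ideal (𝓞 K),
      0 ≤ {p | Prime p}.indicator (fun p => c1Term h (absNorm p)) p :=
    Set.indicator_nonneg fun p hp => c1Term_nonneg (by linarith [two_le_absNorm_of_prime hp])
  have hsum : ∑ p ∈ primesLE K x, c1Term h (absNorm p) =
      ∑ p ∈ primesLE K x, {p | Prime p}.indicator (fun p => c1Term h (absNorm p)) p :=
    Finset.sum_congr rfl fun p hp => (Set.indicator_of_mem (s := {p : Ideal (𝓞 K) | Prime p})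
      (mem_primesLE.1 hp).1 fun p => c1Term h (absNorm p)).symm
  have hlog : x ^ (1 - (h : ℝ)) ≤ (Real.log x)⁻¹ :=
    calc x ^ (1 - (h : ℝ)) ≤ x ^ (-1 : ℝ) :=
          Real.rpow_le_rpow_of_exponent_le hx.le (by linarith)
      _ = x⁻¹ := Real.rpow_neg_one x
      _ ≤ (Real.log x)⁻¹ := inv_anti₀ (Real.log_pos hx) (Real.log_le_self (by linarith))
  rw [C1K_eq_sub_tsum_indicator, sub_sub_cancel, hsum, div_eq_mul_inv, mul_assoc]
  refine (abs_tsum_sub_sum_le hnonneg fun T hT => sum_indicator_prime_c1Term_le (by lia)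
    (hB x (by linarith)) hT).trans ?_
  gcongr

lemma MertensK.exists_abs_sum_inv_absNorm_sub_sum_c1Term_le {A : ℝ} (hA : MertensK K A)
    (hh : 2 ≤ h) :
    ∃ C : ℝ, ∀ x : ℝ, 1 < x →
      |∑ p ∈ primesLE K x, (1 / absNorm p : ℝ) - ∑ p ∈ primesLE K x, c1Term h (absNorm p) -
        Real.log (Real.log x) - C1K K h A| ≤ C / Real.log x := by
  obtain ⟨D, hmertens⟩ := hA.exists_abs_sum_inv_absNorm_sub_log_log_le
  obtain ⟨B, hseries⟩ := exists_abs_sub_C1K_sub_sum_c1Term_le K hh A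
  refine ⟨D + B, fun x hx => ?_⟩
  have hsplit (s t l : ℝ) : s - t - l - C1K K h A = (s - l - A) + (A - C1K K h A - t) := by ring
  rw [hsplit, add_div]
  exact (abs_add_le _ _).trans (add_le_add (hmertens x hx) (hseries x hx))

lemma omegaK_eq_sum_indicator_dvd {I : Ideal (𝓞 K)} {x : ℝ} (hI : I ∈ idealsLE K x) :
    (omegaK I : ℝ) = ∑ p ∈ primesLE K x, {I | p ∣ I}.indicator 1 I := by
  classical
  rw [mem_idealsLE] at hI
  have hset : {p : Ideal (𝓞 K) | p.IsPrime ∧ p ≠ ⊥ ∧ p ∣ I} =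
      ↑((primesLE K x).filter (· ∣ I)) := by
    ext p
    rw [Finset.mem_coe, Finset.mem_filter, mem_primesLE, Set.mem_ofPred_eq]
    refine ⟨fun ⟨hp, hp₀, hdvd⟩ => ⟨⟨(Ideal.prime_iff_isPrime hp₀).2 hp, le_trans ?_ hI.2⟩, hdvd⟩,
      fun ⟨⟨hp, _⟩, hdvd⟩ => ⟨Ideal.isPrime_of_prime hp, hp.ne_zero, hdvd⟩⟩
    exact_mod_cast absNorm_le_absNorm_of_dvd hI.1 hdvd
  rw [omegaK, hset, Set.ncard_coe_finset]
  simp [Set.indicator_apply]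

lemma finsum_omegaK_eq_sum_hFreeMultipleCount (h : ℕ) (x : ℝ) :
    ∑ᶠ I ∈ {I : Ideal (𝓞 K) | I ≠ ⊥ ∧ HFreeI h I ∧ (absNorm I : ℝ) ≤ x}, (omegaK I : ℝ) =
      ∑ p ∈ primesLE K x, hFreeMultipleCount h p x := by
  classical
  have hset : {I : Ideal (𝓞 K) | I ≠ ⊥ ∧ HFreeI h I ∧ (absNorm I : ℝ) ≤ x} =
      ↑((idealsLE K x).filter (HFreeI h)) := by
    ext I
    simp only [Set.mem_ofPred_eq, Finset.mem_coe, Finset.mem_filter, mem_idealsLE]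
    tauto
  simp only [hset, finsum_mem_coe_finset, hFreeMultipleCount]
  rw [Finset.sum_comm, Finset.sum_filter]
  refine Finset.sum_congr rfl fun I hI => ?_
  split_ifs with hfree
  · simp [omegaK_eq_sum_indicator_dvd hI, Set.indicator_apply, hfree]
  · simp [hfree]

variable (K) in
lemma exists_abs_sum_hFreeMultipleCount_sub_le (hh : 2 ≤ h) :
    ∃ C : ℝ, ∀ x : ℝ, 1 < x →
      |∑ p ∈ primesLE K x, hFreeMultipleCount h p x - kappaK K / zetaK K h * (x *
          (∑ p ∈ primesLE K x, (1 / absNorm p : ℝ) - ∑ p ∈ primesLE K x, c1Term h (absNorm p)))| ≤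
        C * (x / Real.log x) := by
  obtain ⟨C, a, hC, ha₀, ha₁, hcount⟩ := exists_abs_hFreeMultipleCount_sub_le K hh
  obtain ⟨D, hsum⟩ := exists_sum_primesLE_div_rpow_le K ha₀.le ha₁
  refine ⟨C * D, fun x hx => ?_⟩
  rw [← Finset.sum_sub_distrib, Finset.mul_sum, Finset.mul_sum, ← Finset.sum_sub_distrib]
  calc _ ≤ ∑ p ∈ primesLE K x, C * (x / absNorm p) ^ a :=
        (Finset.abs_sum_le_sum_abs _ _).trans (Finset.sum_le_sum (hcount x))
    _ ≤ C * (D * (x / Real.log x)) := by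
        rw [← Finset.mul_sum]
        exact mul_le_mul_of_nonneg_left (hsum x hx) hC
    _ = C * D * (x / Real.log x) := (mul_assoc _ _ _).symm

end FirstMoment

/-- First moment of `ω` over `h`-free ideals of a number field. -/
theorem first_moment_omega_hfree_ideals (K : Type*) [Field K] [NumberField K]
    (h : ℕ) (hh : 2 ≤ h) (A : ℝ) (hA : MertensK K A) :
    (fun x : ℝ =>
        (∑ᶠ I ∈ {I : Ideal (𝓞 K) | I ≠ ⊥ ∧ HFreeI h I ∧ (Ideal.absNorm I : ℝ) ≤ x},
            (omegaK I : ℝ))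
          - kappaK K / zetaK K h * (x * Real.log (Real.log x))
          - kappaK K * C1K K h A / zetaK K h * x)
      =O[atTop] fun x : ℝ => x / Real.log x := by
  obtain ⟨C, hcount⟩ := exists_abs_sum_hFreeMultipleCount_sub_le K hh
  obtain ⟨D, hconst⟩ := hA.exists_abs_sum_inv_absNorm_sub_sum_c1Term_le hh
  have hκζ : 0 ≤ kappaK K / zetaK K h :=
    div_nonneg (kappaK_pos K).le (by linarith [one_le_zetaK K hh])
  refine IsBigO.of_bound (C + kappaK K / zetaK K h * D)
    ((eventually_gt_atTop 1).mono fun x hx => ?_)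
  have hx₀ : 0 < x := by linarith
  rw [finsum_omegaK_eq_sum_hFreeMultipleCount, Real.norm_eq_abs,
    Real.norm_of_nonneg (div_nonneg hx₀.le (Real.log_pos hx).le)]
  set S := ∑ p ∈ primesLE K x, (1 / absNorm p : ℝ) - ∑ p ∈ primesLE K x, c1Term h (absNorm p)
  calc _ = |(∑ p ∈ primesLE K x, hFreeMultipleCount h p x - kappaK K / zetaK K h * (x * S)) +
        kappaK K / zetaK K h * x * (S - Real.log (Real.log x) - C1K K h A)| := by ring_nf
    _ ≤ C * (x / Real.log x) + kappaK K / zetaK K h * x * (D / Real.log x) := by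
        refine (abs_add_le _ _).trans (add_le_add (hcount x hx) ?_)
        rw [abs_mul, abs_of_nonneg (by positivity)]
        gcongr
        exact hconst x hx
    _ = _ := by ring
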